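/- arXiv:1505.06936 — 3 statements merged into one kernel-verified Lean document; each statement's English description precedes it below -/
import Mathlib

section
/- Let n ≥ 1 and let F be a Finsler function on ℝⁿ. Then (ℝⁿ, F) is rectilinear in the standard coordinates (i.e. projectively flat with respect to the identity chart) if and only if F satisfies the Hamel equations in the standard coordinates. -/
open scoped BigOperators Topology
noncomputable section

abbrev E (n : ℕ) := Fin n → ℝ

/-- Partial derivative with respect to the base coordinate `x^i`. -/
def pdx {n : ℕ} (i : Fin n) (f : E n × E n → ℝ) (p : E n × E n) : ℝ :=
  fderiv ℝ f p (Pi.single i 1, 0)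

/-- Partial derivative with respect to the fibre coordinate `y^i`. -/
def pdy {n : ℕ} (i : Fin n) (f : E n × E n → ℝ) (p : E n × E n) : ℝ :=
  fderiv ℝ f p (0, Pi.single i 1)

/-- A Finsler function on `ℝⁿ`. -/
structure IsFinsler {n : ℕ} (F : E n × E n → ℝ) : Prop where
  smooth : ContDiffOn ℝ (⊤ : ℕ∞) F {p : E n × E n | p.2 ≠ 0}
  homog : ∀ (x y : E n) (c : ℝ), 0 < c → F (x, c • y) = c * F (x, y)
  pos : ∀ (x y : E n), y ≠ 0 → 0 < F (x, y)
  posDef : ∀ (x y : E n), y ≠ 0 →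
    (Matrix.of fun i j : Fin n =>
      (1 / 2) * pdy i (pdy j (fun p => F p ^ 2)) (x, y)).PosDef

/-- A geodesic of `(ℝⁿ, F)`: a `C²` curve on a nontrivial open interval, with nowhere
vanishing velocity, positive constant speed, satisfying the Euler–Lagrange equations. -/
structure IsGeodesic {n : ℕ} (F : E n × E n → ℝ) (γ : ℝ → E n) (t₁ t₂ : ℝ) : Prop where
  lt : t₁ < t₂
  smooth : ContDiffOn ℝ 2 γ (Set.Ioo t₁ t₂)
  vel : ∀ t ∈ Set.Ioo t₁ t₂, deriv γ t ≠ 0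
  constSpeed : ∃ c : ℝ, 0 < c ∧ ∀ t ∈ Set.Ioo t₁ t₂, F (γ t, deriv γ t) = c
  eulerLagrange : ∀ (i : Fin n), ∀ t ∈ Set.Ioo t₁ t₂,
    deriv (fun s => pdy i F (γ s, deriv γ s)) t = pdx i F (γ t, deriv γ t)

/-- The Hamel equations in the standard coordinates. -/
def SatisfiesHamel {n : ℕ} (F : E n × E n → ℝ) : Prop :=
  ∀ (x y : E n), y ≠ 0 → ∀ i : Fin n,
    ∑ k, pdx k (pdy i F) (x, y) * y k = ∑ k, pdx i (pdy k F) (x, y) * y k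

/-- `(ℝⁿ, F)` is rectilinear in the standard coordinates. -/
def Rectilinear {n : ℕ} (F : E n × E n → ℝ) : Prop :=
  ∀ (γ : ℝ → E n) (t₁ t₂ : ℝ), IsGeodesic F γ t₁ t₂ →
    ∃ (f : ℝ → ℝ) (a b : E n), a ≠ 0 ∧
      ContDiffOn ℝ 2 f (Set.Ioo t₁ t₂) ∧
      (∀ t ∈ Set.Ioo t₁ t₂, 0 < deriv f t) ∧
      ∀ t ∈ Set.Ioo t₁ t₂, γ t = f t • a + b

lemma pd_lin {n : ℕ} (h : E n × E n → ℝ) (p : E n × E n) (u v : E n) :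
    fderiv ℝ h p (u, v) = ∑ k, pdx k h p * u k + ∑ k, pdy k h p * v k := by
  have e1 : fderiv ℝ h p (u, v) = fderiv ℝ h p (u, 0) + fderiv ℝ h p (0, v) := by
    rw [← map_add]; simp
  have e2 : ∀ L : E n →L[ℝ] ℝ, ∀ u : E n, L u = ∑ k, L (Pi.single k 1) * u k := by
    intro L u
    conv_lhs => rw [← Finset.univ_sum_single u]
    rw [map_sum]
    refine Finset.sum_congr rfl fun k _ => ?_
    have : (Pi.single k (u k) : E n) = u k • Pi.single k 1 := by
      rw [← Pi.single_smul]; simp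
    rw [this, map_smul, smul_eq_mul, mul_comm]
  rw [e1]
  congr 1
  · exact e2 ((fderiv ℝ h p).comp (ContinuousLinearMap.inl ℝ (E n) (E n))) u
  · exact e2 ((fderiv ℝ h p).comp (ContinuousLinearMap.inr ℝ (E n) (E n))) v

lemma chain {n : ℕ} {h : E n × E n → ℝ} {γ η : ℝ → E n} {u v : E n} {t : ℝ}
    (hh : DifferentiableAt ℝ h (γ t, η t)) (hγ : HasDerivAt γ u t) (hη : HasDerivAt η v t) :
    HasDerivAt (fun s => h (γ s, η s))
      (∑ k, pdx k h (γ t, η t) * u k + ∑ k, pdy k h (γ t, η t) * v k) t := by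
  rw [← pd_lin]
  exact hh.hasFDerivAt.comp_hasDerivAt t (hγ.prodMk hη)

lemma open_U {n : ℕ} : IsOpen {p : E n × E n | p.2 ≠ 0} :=
  isOpen_ne.preimage continuous_snd


lemma smF {n : ℕ} {F : E n × E n → ℝ} (hF : IsFinsler F) {p : E n × E n} (hp : p.2 ≠ 0) : ContDiffAt ℝ (⊤ : ℕ∞) F p :=
  hF.smooth.contDiffAt (open_U.mem_nhds hp)

lemma sm_y {n : ℕ} {h : E n × E n → ℝ} {p : E n × E n} (hh : ContDiffAt ℝ (⊤ : ℕ∞) h p) (i : Fin n) :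
    ContDiffAt ℝ (⊤ : ℕ∞) (pdy i h) p := by
  have := hh.fderiv_right (m := (⊤ : ℕ∞)) (by simp)
  exact this.clm_apply contDiffAt_const

lemma sm_x {n : ℕ} {h : E n × E n → ℝ} {p : E n × E n} (hh : ContDiffAt ℝ (⊤ : ℕ∞) h p) (i : Fin n) :
    ContDiffAt ℝ (⊤ : ℕ∞) (pdx i h) p := by
  have := hh.fderiv_right (m := (⊤ : ℕ∞)) (by simp)
  exact this.clm_apply contDiffAt_const

lemma sm_d {n : ℕ} {h : E n × E n → ℝ} {p : E n × E n} (hh : ContDiffAt ℝ (⊤ : ℕ∞) h p) :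
    DifferentiableAt ℝ h p := hh.differentiableAt (by simp)

lemma euler {n : ℕ} {F : E n × E n → ℝ} (hF : IsFinsler F) {p : E n × E n} (hp : p.2 ≠ 0) : ∑ k, pdy k F p * p.2 k = F p := by
  have h1 : HasDerivAt (fun s : ℝ => s • p.2) p.2 1 := by
    simpa using (hasDerivAt_id (1 : ℝ)).smul_const p.2
  have h2 := chain (h := F) (γ := fun _ => p.1) (η := fun s : ℝ => s • p.2) (t := 1)
    (by simpa using sm_d (smF hF hp)) (hasDerivAt_const _ _) h1
  have h3 : HasDerivAt (fun s : ℝ => F (p.1, s • p.2)) (F p) 1 := by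
    have : HasDerivAt (fun s : ℝ => s * F p) (F p) 1 := by
      simpa using (hasDerivAt_id (1 : ℝ)).mul_const (F p)
    refine this.congr_of_eventuallyEq ?_
    filter_upwards [lt_mem_nhds (zero_lt_one (α := ℝ))] with s hs
    exact hF.homog p.1 p.2 s hs
  have := h2.unique h3
  simpa using this

lemma euler_fd {n : ℕ} {F : E n × E n → ℝ} (hF : IsFinsler F) {p : E n × E n} (hp : p.2 ≠ 0) (w : E n × E n) :
    ∑ k, (pdy k F p * w.2 k + fderiv ℝ (pdy k F) p w * p.2 k) = fderiv ℝ F p w := by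
  have h1 : HasFDerivAt (fun q : E n × E n => ∑ k, pdy k F q * q.2 k)
      (∑ k, (pdy k F p • ((ContinuousLinearMap.proj k).comp (ContinuousLinearMap.snd ℝ (E n) (E n)))
        + p.2 k • fderiv ℝ (pdy k F) p)) p := by
    refine HasFDerivAt.fun_sum fun k _ => ?_
    refine HasFDerivAt.mul (sm_d (sm_y (smF hF hp) k)).hasFDerivAt ?_
    exact ((ContinuousLinearMap.proj (R := ℝ) (φ := fun _ : Fin n => ℝ) k).comp
      (ContinuousLinearMap.snd ℝ (E n) (E n))).hasFDerivAt
  have h2 : F =ᶠ[𝓝 p] (fun q : E n × E n => ∑ k, pdy k F q * q.2 k) := by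
    filter_upwards [open_U.mem_nhds hp] with q hq
    exact (euler hF hq).symm
  have h3 := (h1.congr_of_eventuallyEq h2).fderiv
  rw [h3]
  simp [mul_comm]

lemma euler_x {n : ℕ} {F : E n × E n → ℝ} (hF : IsFinsler F) {p : E n × E n} (hp : p.2 ≠ 0) (i : Fin n) :
    ∑ k, pdx i (pdy k F) p * p.2 k = pdx i F p := by
  simpa [pdx] using euler_fd hF hp (Pi.single i 1, 0)

lemma euler_y {n : ℕ} {F : E n × E n → ℝ} (hF : IsFinsler F) {p : E n × E n} (hp : p.2 ≠ 0) (i : Fin n) :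
    ∑ k, pdy i (pdy k F) p * p.2 k = 0 := by
  have := euler_fd hF hp (0, Pi.single i 1)
  simp only [Finset.sum_add_distrib, Pi.single_apply, mul_ite, mul_one, mul_zero,
    Finset.sum_ite_eq', Finset.mem_univ, if_true] at this
  have e : pdy i F p = fderiv ℝ F p (0, Pi.single i 1) := rfl
  rw [e] at this
  simpa [pdy] using this

def gm {n : ℕ} (F : E n × E n → ℝ) (p : E n × E n) : Matrix (Fin n) (Fin n) ℝ :=
  Matrix.of fun i j => F p * pdy i (pdy j F) p + pdy i F p * pdy j F p

lemma gm_pd {n : ℕ} {F : E n × E n → ℝ} (hF : IsFinsler F) {p : E n × E n} (hp : p.2 ≠ 0) : (gm F p).PosDef := by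
  have h := hF.posDef p.1 p.2 hp
  convert h using 1
  ext i j
  have h1 : (pdy j (fun p => F p ^ 2)) =ᶠ[𝓝 p] fun q => 2 * F q * pdy j F q := by
    filter_upwards [open_U.mem_nhds hp] with q hq
    have := ((sm_d (smF hF hq)).hasFDerivAt.pow 2).fderiv
    simp only [pdy]
    rw [this]; simp
  have h2 : HasFDerivAt (fun q => 2 * F q * pdy j F q) _ p :=
    (((sm_d (smF hF hp)).hasFDerivAt.const_mul 2)).mul (sm_d (sm_y (smF hF hp) j)).hasFDerivAt
  have h3 := (h2.congr_of_eventuallyEq h1).fderiv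
  simp only [gm, Matrix.of_apply, Prod.mk.eta]
  have e : pdy i (pdy j (fun p => F p ^ 2)) p =
    fderiv ℝ (pdy j (fun p => F p ^ 2)) p (0, Pi.single i 1) := rfl
  rw [e, h3]
  simp [pdy]
  ring

lemma sym {n : ℕ} {F : E n × E n → ℝ} (hF : IsFinsler F) {p : E n × E n} (hp : p.2 ≠ 0) (i j : Fin n) :
    pdy i (pdy j F) p = pdy j (pdy i F) p := by
  have h := (gm_pd hF hp).1.apply i j
  simp only [gm, Matrix.of_apply, star_trivial] at h
  have h2 := hF.pos p.1 p.2 hp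
  have : F p * (pdy i (pdy j F) p) = F p * pdy j (pdy i F) p := by linarith
  exact mul_left_cancel₀ h2.ne' this

lemma euler_y' {n : ℕ} {F : E n × E n → ℝ} (hF : IsFinsler F) {p : E n × E n} (hp : p.2 ≠ 0) (i : Fin n) :
    ∑ k, pdy k (pdy i F) p * p.2 k = 0 := by
  rw [← euler_y hF hp i]
  exact Finset.sum_congr rfl fun k _ => by rw [sym hF hp]

lemma gm_mul {n : ℕ} {F : E n × E n → ℝ} (hF : IsFinsler F) {p : E n × E n} (hp : p.2 ≠ 0) (v : E n) (i : Fin n) :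
    (gm F p).mulVec v i =
      F p * ∑ k, pdy k (pdy i F) p * v k + pdy i F p * ∑ k, pdy k F p * v k := by
  simp only [Matrix.mulVec, dotProduct, gm, Matrix.of_apply, Finset.mul_sum,
    ← Finset.sum_add_distrib]
  exact Finset.sum_congr rfl fun k _ => by rw [sym hF hp]; ring

lemma kern {n : ℕ} {F : E n × E n → ℝ} (hF : IsFinsler F) {p : E n × E n} (hp : p.2 ≠ 0) (v : E n)
    (hv : ∀ i, ∑ k, pdy k (pdy i F) p * v k = 0) :
    v = ((∑ k, pdy k F p * v k) / F p) • p.2 := by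
  set c := (∑ k, pdy k F p * v k) / F p with hc
  have hpos : F p ≠ 0 := (hF.pos p.1 p.2 hp).ne'
  have h0 : (gm F p).mulVec (v - c • p.2) = 0 := by
    rw [Matrix.mulVec_sub, Matrix.mulVec_smul]
    ext i
    simp only [Pi.sub_apply, Pi.smul_apply, Pi.zero_apply, smul_eq_mul]
    rw [gm_mul hF hp, gm_mul hF hp, hv, euler_y' hF hp, euler hF hp, hc]
    field_simp
    ring
  have hinj := Matrix.mulVec_injective_iff_isUnit.2 (gm_pd hF hp).isUnit
  exact sub_eq_zero.1 (hinj (by simpa using h0))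

def zw {n : ℕ} (F : E n × E n → ℝ) (p : E n × E n) : E n := fun i =>
  F p * (pdx i F p - ∑ k, pdx k (pdy i F) p * p.2 k) - pdy i F p * ∑ k, pdx k F p * p.2 k

def zz {n : ℕ} (F : E n × E n → ℝ) (p : E n × E n) : E n := (gm F p)⁻¹.mulVec (zw F p)

lemma zz_eq {n : ℕ} {F : E n × E n → ℝ} (hF : IsFinsler F) {p : E n × E n} (hp : p.2 ≠ 0) : (gm F p).mulVec (zz F p) = zw F p := by
  have := (gm_pd hF hp).isUnit
  rw [zz, Matrix.mulVec_mulVec, Matrix.mul_nonsing_inv _ ((Matrix.isUnit_iff_isUnit_det _).1 this),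
    Matrix.one_mulVec]

lemma zz_speed {n : ℕ} {F : E n × E n → ℝ} (hF : IsFinsler F) {p : E n × E n} (hp : p.2 ≠ 0) :
    ∑ k, pdx k F p * p.2 k + ∑ k, pdy k F p * zz F p k = 0 := by
  have hpos : F p ≠ 0 := (hF.pos p.1 p.2 hp).ne'
  have h1 : ∀ i, F p * ∑ k, pdy k (pdy i F) p * zz F p k
      + pdy i F p * ∑ k, pdy k F p * zz F p k = zw F p i := by
    intro i; rw [← gm_mul hF hp, zz_eq hF hp]
  have h2 : ∑ i, p.2 i * (F p * ∑ k, pdy k (pdy i F) p * zz F p k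
      + pdy i F p * ∑ k, pdy k F p * zz F p k) = ∑ i, p.2 i * zw F p i :=
    Finset.sum_congr rfl fun i _ => by rw [h1]
  have h3 : ∑ i, p.2 i * (∑ k, pdy k (pdy i F) p * zz F p k) = 0 := by
    simp only [Finset.mul_sum]
    rw [Finset.sum_comm]
    refine Finset.sum_eq_zero fun k _ => ?_
    rw [← zero_mul (zz F p k), ← euler_y hF hp k, Finset.sum_mul]
    exact Finset.sum_congr rfl fun i _ => by ring
  have h4 : ∑ i, p.2 i * ∑ k, pdx k (pdy i F) p * p.2 k = ∑ k, pdx k F p * p.2 k := by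
    simp only [Finset.mul_sum]
    rw [Finset.sum_comm]
    refine Finset.sum_congr rfl fun k _ => ?_
    rw [← euler_x hF hp k, Finset.sum_mul]
    exact Finset.sum_congr rfl fun i _ => by ring
  have h5 := euler hF hp
  set S := ∑ k, pdy k F p * zz F p k
  set T := ∑ k, pdx k F p * p.2 k with hT
  have l : ∑ i, p.2 i * (F p * ∑ k, pdy k (pdy i F) p * zz F p k + pdy i F p * S)
      = F p * (∑ i, p.2 i * (∑ k, pdy k (pdy i F) p * zz F p k))
        + (∑ i, pdy i F p * p.2 i) * S := by
    rw [Finset.mul_sum, Finset.sum_mul, ← Finset.sum_add_distrib]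
    exact Finset.sum_congr rfl fun i _ => by ring
  have r : ∑ i, p.2 i * zw F p i = F p * (T - ∑ i, p.2 i * ∑ k, pdx k (pdy i F) p * p.2 k)
      - (∑ i, pdy i F p * p.2 i) * T := by
    rw [Finset.sum_mul]
    conv_rhs => rw [hT]
    rw [← Finset.sum_sub_distrib, Finset.mul_sum, ← Finset.sum_sub_distrib]
    exact Finset.sum_congr rfl fun i _ => by simp only [zw]; ring
  rw [l, r, h3, h4, h5] at h2
  have : F p * (T + S) = 0 := by linarith
  exact (mul_eq_zero.1 this).resolve_left hpos

lemma zz_el {n : ℕ} {F : E n × E n → ℝ} (hF : IsFinsler F) {p : E n × E n} (hp : p.2 ≠ 0) (i : Fin n) :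
    ∑ k, pdx k (pdy i F) p * p.2 k + ∑ k, pdy k (pdy i F) p * zz F p k = pdx i F p := by
  have hpos : F p ≠ 0 := (hF.pos p.1 p.2 hp).ne'
  have h1 := gm_mul hF hp (zz F p) i
  rw [zz_eq hF hp] at h1
  have h2 := zz_speed hF hp
  simp only [zw] at h1
  apply mul_left_cancel₀ hpos
  linear_combination (-1 : ℝ) * h1 - pdy i F p * h2

lemma sm_det {n : ℕ} {m : ℕ} {M : E n × E n → Matrix (Fin m) (Fin m) ℝ} {p : E n × E n}
    (hM : ∀ i j, ContDiffAt ℝ (⊤ : ℕ∞) (fun q => M q i j) p) :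
    ContDiffAt ℝ (⊤ : ℕ∞) (fun q => (M q).det) p := by
  simp only [Matrix.det_apply']
  refine ContDiffAt.sum fun σ _ => contDiffAt_const.mul ?_
  exact contDiffAt_prod fun i _ => hM _ _

lemma sm_gm {n : ℕ} {F : E n × E n → ℝ} (hF : IsFinsler F) {p : E n × E n} (hp : p.2 ≠ 0) (i j : Fin n) :
    ContDiffAt ℝ (⊤ : ℕ∞) (fun q => gm F q i j) p := by
  have h := smF hF hp
  simp only [gm, Matrix.of_apply]
  exact (h.mul (sm_y (sm_y h j) i)).add ((sm_y h i).mul (sm_y h j))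

lemma sm_c {n : ℕ} {p : E n × E n} (k : Fin n) :
    ContDiffAt ℝ (⊤ : ℕ∞) (fun q : E n × E n => q.2 k) p :=
  (contDiffAt_pi.1 contDiffAt_snd) k

lemma sm_zz {n : ℕ} {F : E n × E n → ℝ} (hF : IsFinsler F) {p : E n × E n} (hp : p.2 ≠ 0) : ContDiffAt ℝ (⊤ : ℕ∞) (zz F) p := by
  have h := smF hF hp
  rw [contDiffAt_pi]
  intro i
  simp only [zz, Matrix.mulVec, dotProduct, Matrix.inv_def, Matrix.smul_apply, smul_eq_mul,
    Ring.inverse_eq_inv']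
  refine ContDiffAt.sum fun j _ => ContDiffAt.mul (ContDiffAt.mul ?_ ?_) ?_
  · exact (sm_det (sm_gm hF hp)).inv (gm_pd hF hp).det_pos.ne'
  · simp only [Matrix.adjugate_apply]
    refine sm_det fun a b => ?_
    simp only [Matrix.updateRow_apply]
    split_ifs
    · exact contDiffAt_const
    · exact sm_gm hF hp a b
  · simp only [zw]
    refine (h.mul ((sm_x h j).sub (ContDiffAt.sum fun k _ => (sm_x (sm_y h j) k).mul (sm_c k)))).sub
      ((sm_y h j).mul (ContDiffAt.sum fun k _ => (sm_x h k).mul (sm_c k)))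


lemma const_of {V : Type*} [NormedAddCommGroup V] [NormedSpace ℝ V] {g : ℝ → V} {a b : ℝ}
    (h : ∀ t ∈ Set.Ioo a b, HasDerivAt g 0 t) {s t : ℝ} (hs : s ∈ Set.Ioo a b)
    (ht : t ∈ Set.Ioo a b) : g s = g t := by
  refine isOpen_Ioo.is_const_of_deriv_eq_zero isPreconnected_Ioo
    (fun t ht => (h t ht).differentiableAt.differentiableWithinAt)
    (fun t ht => (h t ht).deriv) hs ht

lemma c2_derivs {V : Type*} [NormedAddCommGroup V] [NormedSpace ℝ V] {g : ℝ → V} {a b : ℝ}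
    (h : ContDiffOn ℝ 2 g (Set.Ioo a b)) :
    ∀ t ∈ Set.Ioo a b, HasDerivAt g (deriv g t) t ∧
      HasDerivAt (deriv g) (deriv (deriv g) t) t := by
  have h2 := h
  rw [show (2 : WithTop ℕ∞) = 1 + 1 from one_add_one_eq_two.symm,
    contDiffOn_succ_iff_deriv_of_isOpen isOpen_Ioo] at h2
  intro t ht
  have hm := isOpen_Ioo.mem_nhds ht
  exact ⟨((h2.1 t ht).differentiableAt hm).hasDerivAt,
    (((h2.2.2 t ht).contDiffAt hm).differentiableAt (by simp)).hasDerivAt⟩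

lemma sumsq_pos {n : ℕ} {v : E n} (hv : v ≠ 0) : 0 < ∑ i, v i * v i := by
  obtain ⟨i, hi⟩ := Function.ne_iff.1 hv
  exact Finset.sum_pos' (fun i _ => mul_self_nonneg _) ⟨i, Finset.mem_univ _, mul_self_pos.2 hi⟩

/-- A curve whose acceleration is parallel to its velocity is a line. -/
lemma line_of {n : ℕ} {γ : ℝ → E n} {t₁ t₂ : ℝ} (hlt : t₁ < t₂)
    (hs : ContDiffOn ℝ 2 γ (Set.Ioo t₁ t₂))
    (hv : ∀ t ∈ Set.Ioo t₁ t₂, deriv γ t ≠ 0)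
    (hpar : ∀ t ∈ Set.Ioo t₁ t₂, ∃ c : ℝ, deriv (deriv γ) t = c • deriv γ t) :
    ∃ (f : ℝ → ℝ) (a b : E n), a ≠ 0 ∧
      ContDiffOn ℝ 2 f (Set.Ioo t₁ t₂) ∧
      (∀ t ∈ Set.Ioo t₁ t₂, 0 < deriv f t) ∧
      ∀ t ∈ Set.Ioo t₁ t₂, γ t = f t • a + b := by
  have hd := c2_derivs hs
  set S : ℝ → ℝ := fun t => ∑ i, deriv γ t i * deriv γ t i with hS
  have hSpos : ∀ t ∈ Set.Ioo t₁ t₂, 0 < S t := fun t ht => sumsq_pos (hv t ht)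
  set W : ℝ → E n := fun t => (Real.sqrt (S t))⁻¹ • deriv γ t with hW
  have hW0 : ∀ t ∈ Set.Ioo t₁ t₂, HasDerivAt W 0 t := by
    intro t ht
    obtain ⟨c, hc⟩ := hpar t ht
    have hg := (hd t ht).2
    have hgi : ∀ i, HasDerivAt (fun s => deriv γ s i) (c * deriv γ t i) t := by
      intro i
      have := (hasDerivAt_pi.1 hg) i
      rw [hc] at this
      simpa using this
    have hS' : HasDerivAt S (2 * c * S t) t := by
      have : HasDerivAt S (∑ i, (c * deriv γ t i * deriv γ t i + deriv γ t i * (c * deriv γ t i))) t :=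
        HasDerivAt.fun_sum fun i _ => (hgi i).mul (hgi i)
      convert this using 1
      simp only [hS, Finset.mul_sum]
      exact Finset.sum_congr rfl fun i _ => by ring
    have hp := hSpos t ht
    have hsq := Real.sqrt_pos.2 hp
    have h1 := (hS'.sqrt hp.ne').fun_inv hsq.ne'
    have h2 := h1.smul hg
    refine h2.congr_deriv ?_
    rw [hc, smul_smul, ← add_smul]
    have : Real.sqrt (S t) ^ 2 = S t := Real.sq_sqrt hp.le
    rw [this]
    have e : (Real.sqrt (S t))⁻¹ * c + -(2 * c * S t / (2 * Real.sqrt (S t))) / S t = 0 := by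
      have := hp.ne'
      have := hsq.ne'
      field_simp
      ring
    rw [e, zero_smul]
  obtain ⟨t0, ht0⟩ := Set.nonempty_Ioo.2 hlt
  set a := W t0 with ha
  have hvel : ∀ t ∈ Set.Ioo t₁ t₂, deriv γ t = Real.sqrt (S t) • a := by
    intro t ht
    have : W t = a := const_of hW0 ht ht0
    rw [← this, hW]
    simp only
    rw [smul_smul, mul_inv_cancel₀ (Real.sqrt_pos.2 (hSpos t ht)).ne', one_smul]
  have ha0 : a ≠ 0 := by
    intro h
    have := hvel t0 ht0
    rw [h, smul_zero] at this
    exact hv t0 ht0 this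
  have hD := sumsq_pos ha0
  set D := ∑ i, a i * a i with hDd
  have hf : ∀ t ∈ Set.Ioo t₁ t₂, HasDerivAt (fun t => (∑ i, γ t i * a i) / D) (Real.sqrt (S t)) t := by
    intro t ht
    have h1 := (hd t ht).1
    have h2 : HasDerivAt (fun t => (∑ i, γ t i * a i) / D) ((∑ i, deriv γ t i * a i) / D) t :=
      (HasDerivAt.fun_sum fun i _ => ((hasDerivAt_pi.1 h1) i).mul_const (a i)).div_const D
    convert h2 using 1
    rw [hvel t ht]
    simp only [Pi.smul_apply, smul_eq_mul, mul_assoc, ← Finset.mul_sum]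
    rw [← hDd]
    field_simp
  refine ⟨fun t => (∑ i, γ t i * a i) / D, a, γ t0 - ((∑ i, γ t0 i * a i) / D) • a, ha0, ?_, ?_, ?_⟩
  · refine ContDiffOn.div_const ?_ _
    exact ContDiffOn.sum fun i _ => ((contDiffOn_pi.1 hs) i).mul contDiffOn_const
  · intro t ht
    rw [(hf t ht).deriv]
    exact Real.sqrt_pos.2 (hSpos t ht)
  · intro t ht
    have h0 : ∀ t ∈ Set.Ioo t₁ t₂,
        HasDerivAt (fun t => γ t - ((∑ i, γ t i * a i) / D) • a) 0 t := by
      intro t ht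
      have := (hd t ht).1.sub ((hf t ht).smul_const a)
      rw [hvel t ht, sub_self] at this
      exact this
    have := const_of h0 ht ht0
    rw [← this]
    simp

lemma hamel_rect {n : ℕ} {F : E n × E n → ℝ} (hF : IsFinsler F) (hH : SatisfiesHamel F) :
    Rectilinear F := by
  intro γ t₁ t₂ hg
  refine line_of hg.lt hg.smooth hg.vel fun t ht => ?_
  have hv := hg.vel t ht
  have hp : ((γ t, deriv γ t) : E n × E n).2 ≠ 0 := hv
  obtain ⟨h1, h2⟩ := c2_derivs hg.smooth t ht
  refine ⟨_, kern hF hp _ fun i => ?_⟩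
  have h3 := chain (sm_d (sm_y (smF hF hp) i)) h1 h2
  have h4 := hg.eulerLagrange i t ht
  rw [h3.deriv, hH _ _ hv i, ← euler_x hF hp i] at h4
  simpa using h4

lemma rect_hamel {n : ℕ} {F : E n × E n → ℝ} (hF : IsFinsler F) (hR : Rectilinear F) :
    SatisfiesHamel F := by
  intro x y hy i
  have hp0 : ((x, y) : E n × E n).2 ≠ 0 := hy
  have hV : ContDiffAt ℝ 1 (fun p : E n × E n => (p.2, zz F p)) (x, y) :=
    contDiffAt_snd.prodMk ((sm_zz hF hp0).of_le (by exact_mod_cast le_top))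
  obtain ⟨α, hα0, ε, hε, hα⟩ :=
    hV.exists_forall_mem_closedBall_exists_eq_forall_mem_Ioo_hasDerivAt₀ 0
  have hc : ContinuousAt α 0 := (hα 0 (by constructor <;> linarith)).continuousAt
  have hne : ∀ᶠ t in 𝓝 (0 : ℝ), (α t).2 ≠ 0 := by
    have : {p : E n × E n | p.2 ≠ 0} ∈ 𝓝 (α 0) := open_U.mem_nhds (by rw [hα0]; exact hy)
    exact hc this
  obtain ⟨r, hr, hrne⟩ := Metric.eventually_nhds_iff.1 hne
  set δ := min ε r with hδ
  have hδ0 : 0 < δ := lt_min hε hr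
  have hne' : ∀ t ∈ Set.Ioo (-δ) δ, (α t).2 ≠ 0 := by
    intro t ht
    apply hrne
    rw [Real.dist_eq, sub_zero]
    exact (abs_lt.2 ht).trans_le (min_le_right _ _)
  have hα' : ∀ t ∈ Set.Ioo (-δ) δ, HasDerivAt α ((α t).2, zz F (α t)) t := by
    intro t ht
    have := min_le_left ε r
    exact hα t ⟨by linarith [ht.1], by linarith [ht.2]⟩
  have hγ : ∀ t ∈ Set.Ioo (-δ) δ, HasDerivAt (fun s => (α s).1) (α t).2 t := fun t ht =>
    (hasFDerivAt_fst (𝕜 := ℝ) (p := α t)).comp_hasDerivAt t (hα' t ht)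
  have hη : ∀ t ∈ Set.Ioo (-δ) δ, HasDerivAt (fun s => (α s).2) (zz F (α t)) t := fun t ht =>
    (hasFDerivAt_snd (𝕜 := ℝ) (p := α t)).comp_hasDerivAt t (hα' t ht)
  have hdγ : ∀ t ∈ Set.Ioo (-δ) δ, deriv (fun s => (α s).1) t = (α t).2 := fun t ht => (hγ t ht).deriv
  have hdγ' : ∀ t ∈ Set.Ioo (-δ) δ, deriv (fun s => (α s).1) =ᶠ[𝓝 t] fun s => (α s).2 := by
    intro t ht
    filter_upwards [isOpen_Ioo.mem_nhds ht] with s hs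
    exact hdγ s hs
  have h0 : (0 : ℝ) ∈ Set.Ioo (-δ) δ := ⟨by linarith, hδ0⟩
  have hgeo : IsGeodesic F (fun s => (α s).1) (-δ) δ := by
    refine ⟨by linarith, ?_, ?_, ?_, ?_⟩
    · rw [show (2 : WithTop ℕ∞) = 1 + 1 from one_add_one_eq_two.symm,
        contDiffOn_succ_iff_deriv_of_isOpen isOpen_Ioo]
      refine ⟨fun t ht => (hγ t ht).differentiableAt.differentiableWithinAt, by simp, ?_⟩
      have : ContDiffOn ℝ 1 (fun s => (α s).2) (Set.Ioo (-δ) δ) := by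
        rw [show (1 : WithTop ℕ∞) = 0 + 1 from (zero_add 1).symm,
          contDiffOn_succ_iff_deriv_of_isOpen isOpen_Ioo]
        refine ⟨fun t ht => (hη t ht).differentiableAt.differentiableWithinAt, by simp, ?_⟩
        rw [contDiffOn_zero]
        have hcz : ContinuousOn (fun t => zz F (α t)) (Set.Ioo (-δ) δ) := fun t ht =>
          (ContinuousAt.comp (f := α) (g := zz F) (sm_zz hF (hne' t ht)).continuousAt
            (hα' t ht).continuousAt).continuousWithinAt
        exact hcz.congr fun t ht => (hη t ht).deriv
      exact this.congr hdγ
    · intro t ht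
      rw [hdγ t ht]; exact hne' t ht
    · refine ⟨F (α 0), hF.pos _ _ (hne' 0 h0), fun t ht => ?_⟩
      rw [hdγ t ht]
      have hz : ∀ t ∈ Set.Ioo (-δ) δ, HasDerivAt (fun s => F ((α s).1, (α s).2)) 0 t := by
        intro t ht
        have := chain (sm_d (smF hF (p := ((α t).1, (α t).2)) (hne' t ht))) (hγ t ht) (hη t ht)
        rw [← zz_speed hF (hne' t ht)]
        exact this
      exact const_of hz ht h0
    · intro i t ht
      rw [hdγ t ht]
      have := chain (sm_d (sm_y (smF hF (p := ((α t).1, (α t).2)) (hne' t ht)) i)) (hγ t ht) (hη t ht)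
      have h2 := zz_el hF (hne' t ht) i
      have h3 : (fun s => pdy i F ((α s).1, deriv (fun s => (α s).1) s)) =ᶠ[𝓝 t]
          fun s => pdy i F ((α s).1, (α s).2) := by
        filter_upwards [isOpen_Ioo.mem_nhds ht] with s hs
        rw [hdγ s hs]
      rw [h3.deriv_eq, this.deriv]
      exact h2
  obtain ⟨f, a, b, ha, hf, hf', hfe⟩ := hR _ _ _ hgeo
  have hfd := c2_derivs hf
  have e1 : ∀ t ∈ Set.Ioo (-δ) δ, (α t).2 = deriv f t • a := by
    intro t ht
    have h1 : HasDerivAt (fun s => f s • a + b) (deriv f t • a) t :=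
      ((hfd t ht).1.smul_const a).add_const b
    have h2 : (fun s => (α s).1) =ᶠ[𝓝 t] fun s => f s • a + b := by
      filter_upwards [isOpen_Ioo.mem_nhds ht] with s hs
      exact hfe s hs
    exact (hγ t ht).unique (h1.congr_of_eventuallyEq h2)
  have e2 : zz F (α 0) = deriv (deriv f) 0 • a := by
    have h2 : (fun s => (α s).2) =ᶠ[𝓝 0] fun s => deriv f s • a := by
      filter_upwards [isOpen_Ioo.mem_nhds h0] with s hs
      exact e1 s hs
    exact (hη 0 h0).unique (((hfd 0 h0).2.smul_const a).congr_of_eventuallyEq h2)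
  have e3 := e1 0 h0
  rw [hα0] at e2 e3
  simp only at e3
  have hfp := (hf' 0 h0).ne'
  have e4 : zz F (x, y) = (deriv (deriv f) 0 / deriv f 0) • y := by
    rw [e2]
    conv_rhs => rw [e3]
    rw [smul_smul, div_mul_cancel₀ _ hfp]
  have h5 := zz_el hF hp0 i
  have h6 : ∑ k, pdy k (pdy i F) (x, y) * zz F (x, y) k = 0 := by
    rw [e4]
    generalize deriv (deriv f) 0 / deriv f 0 = c
    have h7 := euler_y' hF hp0 i
    simp only [Pi.smul_apply, smul_eq_mul]
    rw [← mul_zero c, ← h7, Finset.mul_sum]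
    exact Finset.sum_congr rfl fun k _ => by ring
  rw [h6, add_zero, ← euler_x hF hp0 i] at h5
  exact h5

/-- For `n ≥ 1` and a Finsler function `F` on `ℝⁿ`, the space `(ℝⁿ, F)` is
rectilinear in the standard coordinates iff `F` satisfies the Hamel equations there. -/
theorem statement0 {n : ℕ} (hn : 1 ≤ n) (F : E n × E n → ℝ) (hF : IsFinsler F) :
    Rectilinear F ↔ SatisfiesHamel F := by
  exact ⟨rect_hamel hF, hamel_rect hF⟩
end
end

section
/- Let n ≥ 2, let U ⊆ ℝⁿ be a connected open set, and let g be a smooth Riemannian metric on U with associated Finsler function F(x,y) = √(∑_{i,j} g_{ij}(x)·y^i·y^j). Then g has constant sectional curvature — i.e. there exists c ∈ ℝ such that R_{ijkl} = c·(g_{ik}g_{jl} − g_{il}g_{jk}) throughout U — if and only if every point of U has an open neighborhood V and a smooth diffeomorphism φ of V onto an open subset of ℝⁿ such that the expression F̄ of F in the φ-coordinates satisfies the Hamel equations at every point of φ(V) and every y ≠ 0. -/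
open scoped BigOperators Topology
noncomputable section

/-- Partial derivative on `ℝⁿ` in the direction of the `i`-th coordinate. -/
def pd {n : ℕ} (i : Fin n) (f : E n → ℝ) (x : E n) : ℝ :=
  fderiv ℝ f x (Pi.single i 1)

/-- Christoffel symbols `Γ^i_{jk}` of a Riemannian metric `g`. -/
def Christoffel {n : ℕ} (g : E n → Matrix (Fin n) (Fin n) ℝ) (i j k : Fin n) (x : E n) : ℝ :=
  (1 / 2) * ∑ l, (g x)⁻¹ i l *
    (pd k (fun x' => g x' l j) x + pd j (fun x' => g x' l k) x - pd l (fun x' => g x' j k) x)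

/-- Curvature tensor `R^i_{jkl}` of a Riemannian metric `g`. -/
def RiemUp {n : ℕ} (g : E n → Matrix (Fin n) (Fin n) ℝ) (i j k l : Fin n) (x : E n) : ℝ :=
  pd k (Christoffel g i l j) x - pd l (Christoffel g i k j) x +
    ∑ m, (Christoffel g i k m x * Christoffel g m l j x -
      Christoffel g i l m x * Christoffel g m k j x)

/-- Covariant curvature tensor `R_{ijkl}`. -/
def RiemLow {n : ℕ} (g : E n → Matrix (Fin n) (Fin n) ℝ) (i j k l : Fin n) (x : E n) : ℝ :=
  ∑ m, g x i m * RiemUp g m j k l x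

section Helpers
set_option maxSynthPendingDepth 3

section Frob
lemma one_add_one_le_infty : (1 + 1 : WithTop ℕ∞) ≤ ((⊤ : ℕ∞) : WithTop ℕ∞) := by
  have h : (((2 : ℕ∞)) : WithTop ℕ∞) ≤ ((⊤ : ℕ∞) : WithTop ℕ∞) := WithTop.coe_le_coe.2 le_top
  rw [one_add_one_eq_two]
  exact h
open Set Metric
variable {X : Type*} [NormedAddCommGroup X] [NormedSpace ℝ X]
  {W : Type*} [NormedAddCommGroup W] [NormedSpace ℝ W]

/-- Algebraic residual estimate used for the Frobenius theorem. -/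
lemma frob_residual (Ap Aq : X →L[ℝ] W →L[ℝ] W) (D : X →L[ℝ] X →L[ℝ] W →L[ℝ] W)
    (x h : X) (w : W) (t C L M : ℝ) (ht0 : 0 ≤ t) (ht1 : t ≤ 1)
    (hC : 0 ≤ C) (hL : 0 ≤ L) (hM : 0 ≤ M)
    (hAp : ‖Ap‖ ≤ C) (hD : ‖D‖ ≤ C) (hw : ‖w‖ ≤ M) (hxh : ‖x + h‖ ≤ 1) (hh : ‖h‖ ≤ 2)
    (hρ : ‖Aq - Ap - D (t • h)‖ ≤ L * ‖h‖ ^ 2)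
    (flat : D x h w + Ap h (Ap x w) = D h x w + Ap x (Ap h w)) :
    ‖(Ap x w + (Ap h w + t • (D x h w + Ap h (Ap x w)))) -
      Aq (x + h) (w + t • Ap h w)‖ ≤
      (C * C * M + C * M + C * C * M + L * (M + 2 * C * M)) * ‖h‖ ^ 2 := by
  set ρ := Aq - Ap - D (t • h) with hρdef
  have hAq : Aq = Ap + D (t • h) + ρ := by rw [hρdef]; abel
  have e : (Ap x w + (Ap h w + t • (D x h w + Ap h (Ap x w)))) -
      Aq (x + h) (w + t • Ap h w) =
      -(t • Ap h (Ap h w) + t • D h h w + (t * t) • D h (x + h) (Ap h w)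
        + ρ (x + h) (w + t • Ap h w)) := by
    rw [flat, hAq]
    simp only [map_add, map_smul, add_apply, smul_apply,
      smul_add, smul_smul]
    abel
  rw [e, norm_neg]
  have hn := norm_nonneg h
  have n1 : ‖Ap h w‖ ≤ C * ‖h‖ * M :=
    (Ap.le_opNorm₂ h w).trans (by gcongr)
  have n2 : ‖t • Ap h (Ap h w)‖ ≤ C * C * M * ‖h‖ ^ 2 := by
    rw [norm_smul, Real.norm_of_nonneg ht0]
    calc t * ‖Ap h (Ap h w)‖ ≤ 1 * (C * ‖h‖ * (C * ‖h‖ * M)) := by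
          gcongr
          exact (Ap.le_opNorm₂ h _).trans (by gcongr)
      _ = _ := by ring
  have dd : ∀ u v : X, ∀ z : W, ‖D u v z‖ ≤ C * ‖u‖ * ‖v‖ * ‖z‖ := fun u v z =>
    ((D u).le_opNorm₂ v z).trans (by
      gcongr
      exact (D.le_opNorm u).trans (by gcongr))
  have n3 : ‖t • D h h w‖ ≤ C * M * ‖h‖ ^ 2 := by
    rw [norm_smul, Real.norm_of_nonneg ht0]
    calc t * ‖D h h w‖ ≤ 1 * (C * ‖h‖ * ‖h‖ * M) := by
          gcongr
          exact (dd _ _ _).trans (by gcongr)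
      _ = _ := by ring
  have n4 : ‖(t * t) • D h (x + h) (Ap h w)‖ ≤ C * C * M * ‖h‖ ^ 2 := by
    rw [norm_smul, Real.norm_of_nonneg (by positivity)]
    calc t * t * ‖D h (x + h) (Ap h w)‖ ≤ 1 * 1 * (C * ‖h‖ * 1 * (C * ‖h‖ * M)) := by
          gcongr
          exact (dd _ _ _).trans (by gcongr)
      _ = _ := by ring
  have n5 : ‖ρ (x + h) (w + t • Ap h w)‖ ≤ L * (M + 2 * C * M) * ‖h‖ ^ 2 := by
    have : ‖w + t • Ap h w‖ ≤ M + 2 * C * M := by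
      refine (norm_add_le _ _).trans (add_le_add hw ?_)
      rw [norm_smul, Real.norm_of_nonneg ht0]
      calc t * ‖Ap h w‖ ≤ 1 * (C * 2 * M) := by
            gcongr
            exact n1.trans (by gcongr)
        _ = _ := by ring
    calc _ ≤ ‖ρ‖ * ‖x + h‖ * ‖w + t • Ap h w‖ := ρ.le_opNorm₂ _ _
      _ ≤ (L * ‖h‖ ^ 2) * 1 * (M + 2 * C * M) := by gcongr
      _ = _ := by ring
  refine (norm_add_le _ _).trans ?_
  refine (add_le_add_left (norm_add_le _ _) _).trans ?_
  have := norm_add_le (t • Ap h (Ap h w)) (t • D h h w)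
  nlinarith [n2, n3, n4, n5]

variable [CompleteSpace W]

lemma frob_ray (A : X → X →L[ℝ] W →L[ℝ] W) (x₀ x : X) (C r : ℝ) (hC : 0 ≤ C) (w₀ : W)
    (hb : ∀ y ∈ ball x₀ r, ‖A y‖ ≤ C) (hc : ContinuousOn A (ball x₀ r))
    (hx : ‖x‖ < r) (hsmall : C * ‖x‖ * (‖w₀‖ + 1) ≤ 1) :
    ∃ u : ℝ → W, u 0 = w₀ ∧ ∀ t ∈ Icc (0:ℝ) 1,
      HasDerivWithinAt u (A (x₀ + t • x) x (u t)) (Icc 0 1) t := by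
  have hmem : ∀ t ∈ Icc (0:ℝ) 1, x₀ + t • x ∈ ball x₀ r := by
    intro t ht
    simp only [mem_ball, dist_self_add_left, norm_smul, Real.norm_of_nonneg ht.1]
    nlinarith [ht.2, norm_nonneg x]
  have hop : ∀ t ∈ Icc (0:ℝ) 1, ‖A (x₀ + t • x) x‖ ≤ C * ‖x‖ := fun t ht =>
    ((A (x₀ + t • x)).le_opNorm x).trans (by gcongr; exact hb _ (hmem t ht))
  have P : IsPicardLindelof (fun t w => A (x₀ + t • x) x w) (tmin := 0) (tmax := 1)
      ⟨0, by simp⟩ w₀ 1 0 1 ⟨C * ‖x‖, by positivity⟩ := by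
    refine ⟨?_, ?_, ?_, ?_⟩
    · intro t ht
      refine ((A (x₀ + t • x) x).lipschitz.weaken ?_).lipschitzOnWith
      exact hop t ht
    · intro w _
      have h1 : ContinuousOn (fun t : ℝ => A (x₀ + t • x)) (Icc 0 1) :=
        hc.comp (by fun_prop) hmem
      exact (h1.clm_apply continuousOn_const).clm_apply continuousOn_const
    · intro t ht w hw
      refine (ContinuousLinearMap.le_opNorm _ _).trans ?_
      have : ‖w‖ ≤ ‖w₀‖ + 1 := by
        have h2 : ‖w - w₀‖ ≤ 1 := by simpa [dist_eq_norm] using hw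
        have := norm_le_norm_add_norm_sub' w w₀
        linarith
      calc _ ≤ C * ‖x‖ * (‖w₀‖ + 1) := by gcongr; exact hop t ht
        _ ≤ 1 := hsmall
    · simp
  exact P.exists_eq_forall_mem_Icc_hasDerivWithinAt₀

lemma frob_bound (B : ℝ → W →L[ℝ] W) (u : ℝ → W) (w₀ : W) (C : ℝ) (hC : 0 ≤ C)
    (hB : ∀ t ∈ Icc (0:ℝ) 1, ‖B t‖ ≤ C) (h0 : u 0 = w₀)
    (hu : ∀ t ∈ Icc (0:ℝ) 1, HasDerivWithinAt u (B t (u t)) (Icc 0 1) t) :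
    ∀ t ∈ Icc (0:ℝ) 1, ‖u t‖ ≤ ‖w₀‖ * Real.exp C := by
  intro t ht
  have := norm_le_gronwallBound_of_norm_deriv_right_le (f := u) (f' := fun t => B t (u t))
    (δ := ‖w₀‖) (K := C) (ε := 0) (a := 0) (b := 1)
    (fun t ht => (hu t ht).continuousWithinAt)
    (fun t ht => (hu t ⟨ht.1, ht.2.le⟩).mono_of_mem_nhdsWithin (Icc_mem_nhdsGE_of_mem ht)) (by rw [h0])
    (fun t ht => by
      rw [add_zero]
      exact ((B t).le_opNorm _).trans (by gcongr; exact hB t ⟨ht.1, ht.2.le⟩)) t ht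
  rw [gronwallBound_ε0] at this
  refine this.trans ?_
  gcongr
  nlinarith [ht.2, ht.1]

/-- Existence of parallel sections of a flat connection (linear Frobenius theorem). -/
lemma frob_main (A : X → X →L[ℝ] W →L[ℝ] W) (U : Set X) (hU : IsOpen U)
    (hA : ContDiffOn ℝ (⊤ : ℕ∞) A U)
    (flat : ∀ x ∈ U, ∀ h k w, fderiv ℝ A x k h w + A x h (A x k w) =
      fderiv ℝ A x h k w + A x k (A x h w)) (x₀ : X) (hx₀ : x₀ ∈ U) (w₀ : W) :
    ∃ w : X → W, w x₀ = w₀ ∧ ∀ᶠ x in 𝓝 x₀, HasFDerivAt w ((A x).flip (w x)) x := by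
  have hAx : ContDiffAt ℝ (⊤ : ℕ∞) A x₀ := hA.contDiffAt (hU.mem_nhds hx₀)
  have hDA : ContDiffAt ℝ 1 (fderiv ℝ A) x₀ := hAx.fderiv_right (m := 1) one_add_one_le_infty
  obtain ⟨L, s, hs, hL⟩ := hDA.exists_lipschitzOnWith
  set C : ℝ := ‖A x₀‖ + ‖fderiv ℝ A x₀‖ + 1 with hCdef
  have hC : 0 < C := by positivity
  have e1 : ∀ᶠ y in 𝓝 x₀, ‖A y‖ ≤ C := by
    have : ∀ᶠ y in 𝓝 x₀, ‖A y‖ < C := hAx.continuousAt.norm.eventually_lt continuousAt_const (by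
      have := norm_nonneg (fderiv ℝ A x₀); simp only [hCdef]; linarith)
    exact this.mono fun _ h => h.le
  have e2 : ∀ᶠ y in 𝓝 x₀, ‖fderiv ℝ A y‖ ≤ C := by
    have : ∀ᶠ y in 𝓝 x₀, ‖fderiv ℝ A y‖ < C :=
      hDA.continuousAt.norm.eventually_lt continuousAt_const (by
      have := norm_nonneg (A x₀); simp only [hCdef]; linarith)
    exact this.mono fun _ h => h.le
  obtain ⟨r, hr, hball⟩ := Metric.eventually_nhds_iff_ball.1
    ((e1.and e2).and ((hU.eventually_mem hx₀).and (Filter.eventually_mem_set.2 hs)))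
  obtain ⟨ε, hε0, hεr, hε1, hεC⟩ : ∃ ε > 0, ε ≤ r ∧ ε ≤ 1 ∧ C * ε * (‖w₀‖ + 1) ≤ 1 := by
    refine ⟨min (min r 1) (1 / (C * (‖w₀‖ + 1))), by positivity,
      (min_le_left _ _).trans (min_le_left _ _), (min_le_left _ _).trans (min_le_right _ _), ?_⟩
    have := min_le_right (min r 1) (1 / (C * (‖w₀‖ + 1)))
    calc _ ≤ C * (1 / (C * (‖w₀‖ + 1))) * (‖w₀‖ + 1) := by gcongr
      _ = 1 := by field_simp
  have ray : ∀ x : X, ∃ u : ℝ → W, ‖x‖ < ε → (u 0 = w₀ ∧ ∀ t ∈ Icc (0:ℝ) 1,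
      HasDerivWithinAt u (A (x₀ + t • x) x (u t)) (Icc 0 1) t) := by
    intro x
    by_cases hx : ‖x‖ < ε
    · obtain ⟨u, hu⟩ := frob_ray A x₀ x C r hC.le w₀ (fun y hy => (hball y hy).1.1)
        (fun y hy => (hA.continuousOn.continuousAt (hU.mem_nhds (hball y hy).2.1)).continuousWithinAt)
        (hx.trans_le hεr) (le_trans (by gcongr) hεC)
      exact ⟨u, fun _ => hu⟩
    · exact ⟨fun _ => 0, fun h => absurd h hx⟩
  choose u hu using ray
  have hmem : ∀ x : X, ‖x‖ < ε → ∀ t ∈ Icc (0:ℝ) 1, x₀ + t • x ∈ ball x₀ r := by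
    intro x hx t ht
    simp only [mem_ball, dist_self_add_left, norm_smul, Real.norm_of_nonneg ht.1]
    nlinarith [ht.2, norm_nonneg x]
  have hop : ∀ x : X, ‖x‖ < ε → ∀ t ∈ Icc (0:ℝ) 1, ‖A (x₀ + t • x) x‖ ≤ C := fun x hx t ht => by
    refine ((A (x₀ + t • x)).le_opNorm x).trans ?_
    calc _ ≤ C * 1 := by
          gcongr
          · exact (hball _ (hmem x hx t ht)).1.1
          · linarith
      _ = C := mul_one _
  set M := ‖w₀‖ * Real.exp C with hM
  have hM0 : 0 ≤ M := by positivity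
  have hub : ∀ x : X, ‖x‖ < ε → ∀ t ∈ Icc (0:ℝ) 1, ‖u x t‖ ≤ M := fun x hx =>
    frob_bound (fun t => A (x₀ + t • x) x) (u x) w₀ C hC.le (hop x hx) (hu x hx).1 (hu x hx).2
  set K2 := (C * C * M + C * M + C * C * M + L * (M + 2 * C * M)) with hK2
  have hK20 : 0 ≤ K2 := by positivity
  -- key estimate
  have key : ∀ x h : X, ‖x‖ < ε → ‖x + h‖ < ε →
      ‖u (x + h) 1 - (u x 1 + A (x₀ + x) h (u x 1))‖ ≤
        gronwallBound 0 C (K2 * ‖h‖ ^ 2) 1 := by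
    intro x h hx hxh
    have hh : ‖h‖ ≤ 2 := by
      have := norm_sub_le (x + h) x
      simp only [add_sub_cancel_left] at this
      linarith
    have hZ : ∀ t ∈ Icc (0:ℝ) 1, HasDerivWithinAt (fun t => u x t + t • A (x₀ + t • x) h (u x t))
        (A (x₀ + t • x) x (u x t) + (A (x₀ + t • x) h (u x t) +
          t • (fderiv ℝ A (x₀ + t • x) x h (u x t) +
            A (x₀ + t • x) h (A (x₀ + t • x) x (u x t))))) (Icc 0 1) t := by
      intro t ht
      have hd : DifferentiableAt ℝ A (x₀ + t • x) :=
        (hA.contDiffAt (hU.mem_nhds (hball _ (hmem x hx t ht)).2.1)).differentiableAt (by simp)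
      have h1 : HasDerivAt (fun t : ℝ => x₀ + t • x) x t := by
        simpa using ((hasDerivAt_id t).smul_const x).const_add x₀
      have h2 : HasDerivWithinAt (fun t : ℝ => A (x₀ + t • x)) (fderiv ℝ A (x₀ + t • x) x)
          (Icc 0 1) t := (hd.hasFDerivAt.comp_hasDerivAt t h1).hasDerivWithinAt
      have h3 := (h2.clm_apply (hasDerivWithinAt_const t _ h)).clm_apply ((hu x hx).2 t ht)
      have h4 := ((hu x hx).2 t ht).add ((hasDerivWithinAt_id t _).smul h3)
      refine h4.congr_deriv ?_
      simp
      abel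
    have G := dist_le_of_approx_trajectories_ODE_of_mem
      (v := fun t w => A (x₀ + t • (x + h)) (x + h) w) (K := ⟨C, hC.le⟩) (s := fun _ => univ)
      (f := u (x + h)) (f' := fun t => A (x₀ + t • (x + h)) (x + h) (u (x + h) t))
      (g := fun t => u x t + t • A (x₀ + t • x) h (u x t))
      (g' := fun t => (A (x₀ + t • x) x (u x t) + (A (x₀ + t • x) h (u x t) +
          t • (fderiv ℝ A (x₀ + t • x) x h (u x t) +
            A (x₀ + t • x) h (A (x₀ + t • x) x (u x t))))))
      (εf := 0) (εg := K2 * ‖h‖ ^ 2) (δ := 0) (a := 0) (b := 1)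
      (fun t ht => ((A (x₀ + t • (x + h)) (x + h)).lipschitz.weaken
          (hop (x + h) hxh t ⟨ht.1, ht.2.le⟩)).lipschitzOnWith)
      (fun t ht => ((hu (x + h) hxh).2 t ht).continuousWithinAt)
      (fun t ht => ((hu (x + h) hxh).2 t ⟨ht.1, ht.2.le⟩).mono_of_mem_nhdsWithin
        (Icc_mem_nhdsGE_of_mem ht))
      (fun t ht => by simp) (fun _ _ => trivial)
      (fun t ht => (hZ t ht).continuousWithinAt)
      (fun t ht => (hZ t ⟨ht.1, ht.2.le⟩).mono_of_mem_nhdsWithin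
        (Icc_mem_nhdsGE_of_mem ht))
      (fun t ht => by
        have ht' : t ∈ Icc (0:ℝ) 1 := ⟨ht.1, ht.2.le⟩
        rw [dist_eq_norm]
        have hp := hmem x hx t ht'
        have hq := hmem (x + h) hxh t ht'
        refine frob_residual (A (x₀ + t • x)) (A (x₀ + t • (x + h))) (fderiv ℝ A (x₀ + t • x))
          x h (u x t) t C L M ht.1 ht.2.le hC.le L.2 hM0 (hball _ hp).1.1 (hball _ hp).1.2
          (hub x hx t ht') (by linarith) hh ?_ (flat _ (hball _ hp).2.1 h x _)
        have hsub : (x₀ + t • (x + h)) - (x₀ + t • x) = t • h := by rw [smul_add]; abel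
        have hth : ‖t • h‖ ≤ ‖h‖ := by
          rw [norm_smul, Real.norm_of_nonneg ht.1]
          nlinarith [norm_nonneg h, ht.2]
        have := (convex_segment (x₀ + t • x) (x₀ + t • (x + h))).norm_image_sub_le_of_norm_fderiv_le'
          (𝕜 := ℝ) (f := A) (φ := fderiv ℝ A (x₀ + t • x)) (C := L * ‖h‖)
          (fun y hy => (hA.contDiffAt (hU.mem_nhds (hball _
            ((convex_ball x₀ r).segment_subset hp hq hy)).2.1)).differentiableAt (by simp))
          (fun y hy => by
            have hyb := (convex_ball x₀ r).segment_subset hp hq hy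
            have h5 := hL.dist_le_mul y (hball _ hyb).2.2 _ (hball _ hp).2.2
            rw [dist_eq_norm, dist_eq_norm] at h5
            refine h5.trans ?_
            have h6 : ‖y - (x₀ + t • x)‖ ≤ ‖t • h‖ := by
              rw [← hsub]
              exact norm_sub_le_of_mem_segment hy
            exact mul_le_mul_of_nonneg_left (h6.trans hth) L.2)
          (left_mem_segment ℝ _ _) (right_mem_segment ℝ _ _)
        rw [hsub] at this
        calc _ ≤ _ := this
          _ ≤ L * ‖h‖ * ‖h‖ := by gcongr
          _ = _ := by ring)
      (fun _ _ => trivial)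
      (by simp [(hu x hx).1, (hu (x + h) hxh).1]) 1 (by simp)
    simp only [dist_eq_norm, one_smul, zero_add, sub_zero] at G
    exact G
  refine ⟨fun x => u (x - x₀) 1, ?_, ?_⟩
  · have := ((hu 0 (by simpa using hε0)).2)
    have hc := constant_of_derivWithin_zero (f := u 0) (a := 0) (b := 1)
      (fun t ht => (this t ht).differentiableWithinAt)
      (fun t ht => by
        have h1 := (this t ⟨ht.1, ht.2.le⟩).derivWithin
          (uniqueDiffOn_Icc zero_lt_one t ⟨ht.1, ht.2.le⟩)
        simpa using h1) 1 (by simp)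
    simp only [sub_self]
    rw [hc, (hu 0 (by simpa using hε0)).1]
  · filter_upwards [Metric.ball_mem_nhds x₀ hε0] with z hz
    have hz' : ‖z - x₀‖ < ε := by simpa [dist_eq_norm] using hz
    rw [hasFDerivAt_iff_isLittleO_nhds_zero]
    have hO : (fun h : X => u (z + h - x₀) 1 - u (z - x₀) 1 - ((A z).flip (u (z - x₀) 1)) h)
        =O[𝓝 0] fun h => ‖h‖ ^ 2 := by
      refine Asymptotics.IsBigO.of_bound (K2 / C * (Real.exp C - 1)) ?_
      have : ∀ᶠ h : X in 𝓝 0, ‖z - x₀ + h‖ < ε := by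
        have hcont : Continuous fun h : X => ‖z - x₀ + h‖ := by fun_prop
        exact hcont.continuousAt.eventually_lt continuousAt_const (by simpa using hz')
      filter_upwards [this] with h hh
      have := key (z - x₀) h hz' hh
      rw [gronwallBound_of_K_ne_0 hC.ne'] at this
      simp only [zero_mul, zero_add, mul_one] at this
      rw [show z + h - x₀ = z - x₀ + h by abel]
      have e3 : x₀ + (z - x₀) = z := by abel
      rw [e3] at this
      rw [sub_sub]
      refine this.trans (le_of_eq ?_)
      simp
      ring
    refine hO.trans_isLittleO ?_
    have := Asymptotics.isLittleO_norm_pow_id (E' := X) (n := 2) (by norm_num)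
    exact this
end Frob

section Geo
variable {X : Type*} [NormedAddCommGroup X] [NormedSpace ℝ X]
  {Y : Type*} [NormedAddCommGroup Y] [NormedSpace ℝ Y]
  {Z : Type*} [NormedAddCommGroup Z] [NormedSpace ℝ Z]

lemma fd_app {A : X → Y →L[ℝ] Z} {b : X → Y} {x : X} (hA : DifferentiableAt ℝ A x)
    (hb : DifferentiableAt ℝ b x) (l : X) :
    fderiv ℝ (fun y => A y (b y)) x l = fderiv ℝ A x l (b x) + A x (fderiv ℝ b x l) := by
  rw [fderiv_clm_apply hA hb]
  simp [add_comm]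

lemma fd_appc {A : X → Y →L[ℝ] Z} {x : X} (hA : DifferentiableAt ℝ A x) (v : Y) (l : X) :
    fderiv ℝ (fun y => A y v) x l = fderiv ℝ A x l v := by
  rw [fd_app hA (differentiableAt_const v)]
  simp

lemma cdo_diff {f : X → Y} {U : Set X} (hU : IsOpen U) (hf : ContDiffOn ℝ (⊤ : ℕ∞) f U)
    {x : X} (hx : x ∈ U) : DifferentiableAt ℝ f x :=
  (hf.contDiffAt (hU.mem_nhds hx)).differentiableAt (by simp)

lemma cdo_fderiv {f : X → Y} {U : Set X} (hU : IsOpen U) (hf : ContDiffOn ℝ (⊤ : ℕ∞) f U) :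
    ContDiffOn ℝ (⊤ : ℕ∞) (fderiv ℝ f) U :=
  hf.fderiv_of_isOpen hU (by simp)

lemma snd_symm {f : X → Y} {U : Set X} (hU : IsOpen U) (hf : ContDiffOn ℝ (⊤ : ℕ∞) f U)
    {x : X} (hx : x ∈ U) (k l : X) :
    fderiv ℝ (fderiv ℝ f) x k l = fderiv ℝ (fderiv ℝ f) x l k := by
  have h := (hf.contDiffAt (hU.mem_nhds hx)).isSymmSndFDerivAt (n := ((⊤ : ℕ∞) : WithTop ℕ∞))
    (by simpa using one_add_one_eq_two (R := WithTop ℕ∞) ▸ one_add_one_le_infty)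
  exact h k l

lemma snd_symm' {f : X → Y} {U : Set X} (hU : IsOpen U) (hf : ContDiffOn ℝ (⊤ : ℕ∞) f U)
    {x : X} (hx : x ∈ U) (k l : X) {a b : X → Y} (ha : ∀ y ∈ U, fderiv ℝ f y k = a y)
    (hb : ∀ y ∈ U, fderiv ℝ f y l = b y) :
    fderiv ℝ a x l = fderiv ℝ b x k := by
  have h1 : (fun y => fderiv ℝ f y k) =ᶠ[𝓝 x] a :=
    (hU.eventually_mem hx).mono ha
  have h2 : (fun y => fderiv ℝ f y l) =ᶠ[𝓝 x] b :=
    (hU.eventually_mem hx).mono hb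
  have hd := cdo_diff hU (cdo_fderiv hU hf) hx
  rw [← h1.fderiv_eq, ← h2.fderiv_eq, fd_appc hd, fd_appc hd]
  exact snd_symm hU hf hx l k

/-- The curvature of a connection. -/
def Rm (Γ : X → X →L[ℝ] X →L[ℝ] X) (x k l j : X) : X :=
  fderiv ℝ Γ x k l j - fderiv ℝ Γ x l k j + Γ x k (Γ x l j) - Γ x l (Γ x k j)

lemma Rm_antisymm {U : Set X} (hU : IsOpen U) {g : X → X →L[ℝ] X →L[ℝ] ℝ}
    {Γ : X → X →L[ℝ] X →L[ℝ] X} (hg : ContDiffOn ℝ (⊤ : ℕ∞) g U)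
    (hΓ : ContDiffOn ℝ (⊤ : ℕ∞) Γ U)
    (comp : ∀ x ∈ U, ∀ w u v, fderiv ℝ g x w u v = g x (Γ x w u) v + g x u (Γ x w v))
    {x : X} (hx : x ∈ U) (k l u v : X) :
    g x (Rm Γ x k l u) v + g x u (Rm Γ x k l v) = 0 := by
  have dg := cdo_diff hU hg hx
  have dΓ := cdo_diff hU hΓ hx
  have hval : ∀ k : X, ∀ y ∈ U, fderiv ℝ (fun y => g y u v) y k =
      g y (Γ y k u) v + g y u (Γ y k v) := by
    intro k y hy
    have dg' := cdo_diff hU hg hy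
    rw [fd_appc (A := fun y => g y u) (by fun_prop), fd_appc dg', comp y hy]
  have hder : ∀ k l : X, fderiv ℝ (fun y => g y (Γ y k u) v + g y u (Γ y k v)) x l =
      fderiv ℝ g x l (Γ x k u) v + g x (fderiv ℝ Γ x l k u) v +
      (fderiv ℝ g x l u (Γ x k v) + g x u (fderiv ℝ Γ x l k v)) := by
    intro k l
    rw [fderiv_fun_add (by fun_prop) (by fun_prop), add_apply,
      fd_appc (A := fun y => g y (Γ y k u)) (by fun_prop), fd_app dg (by fun_prop),
      fd_appc (A := fun y => Γ y k) (by fun_prop), fd_appc dΓ,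
      fd_app (A := fun y => g y u) (by fun_prop) (by fun_prop),
      fd_appc dg, fd_appc (A := fun y => Γ y k) (by fun_prop), fd_appc dΓ]
    simp
  have := snd_symm' hU (f := fun y => g y u v)
    ((hg.clm_apply contDiffOn_const).clm_apply contDiffOn_const) hx k l (hval k) (hval l)
  rw [hder, hder] at this
  simp only [comp x hx] at this
  simp only [Rm, map_add, map_sub, add_apply, sub_apply]
  linear_combination -this

lemma Rm_of_proj {V : Set X} (hV : IsOpen V) {φ : X → Y} {P : X → X →L[ℝ] ℝ}
    {Γ : X → X →L[ℝ] X →L[ℝ] X} (hφ : ContDiffOn ℝ (⊤ : ℕ∞) φ V)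
    (hΓ : ContDiffOn ℝ (⊤ : ℕ∞) Γ V) (hP : ContDiffOn ℝ (⊤ : ℕ∞) P V)
    (Γsymm : ∀ x ∈ V, ∀ u v, Γ x u v = Γ x v u)
    (M : ∀ y ∈ V, ∀ u v, fderiv ℝ (fderiv ℝ φ) y u v = fderiv ℝ φ y (Γ y u v) +
      P y u • fderiv ℝ φ y v + P y v • fderiv ℝ φ y u)
    {x : X} (hx : x ∈ V) (Q : X → X → ℝ)
    (hQ : ∀ j l, Q j l = fderiv ℝ P x l j - P x (Γ x l j) - P x l * P x j) (k l j : X) :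
    fderiv ℝ φ x (Rm Γ x k l j) = Q j l • fderiv ℝ φ x k - Q j k • fderiv ℝ φ x l +
      (Q k l - Q l k) • fderiv ℝ φ x j := by
  have dP := cdo_diff hV hP hx
  have dΓ := cdo_diff hV hΓ hx
  have hφ' := cdo_fderiv hV hφ
  have dφ' := cdo_diff hV hφ' hx
  have hval : ∀ k : X, ∀ y ∈ V, fderiv ℝ (fun y => fderiv ℝ φ y j) y k =
      fderiv ℝ φ y (Γ y k j) + P y k • fderiv ℝ φ y j + P y j • fderiv ℝ φ y k := by
    intro k y hy
    rw [fd_appc (cdo_diff hV hφ' hy), M y hy]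
  have hder : ∀ k l : X, fderiv ℝ (fun y => fderiv ℝ φ y (Γ y k j) + P y k • fderiv ℝ φ y j
        + P y j • fderiv ℝ φ y k) x l =
      fderiv ℝ (fderiv ℝ φ) x l (Γ x k j) + fderiv ℝ φ x (fderiv ℝ Γ x l k j) +
      (P x k • fderiv ℝ (fderiv ℝ φ) x l j + fderiv ℝ P x l k • fderiv ℝ φ x j) +
      (P x j • fderiv ℝ (fderiv ℝ φ) x l k + fderiv ℝ P x l j • fderiv ℝ φ x k) := by
    intro k l
    rw [fderiv_fun_add (by fun_prop) (by fun_prop), fderiv_fun_add (by fun_prop) (by fun_prop),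
      fderiv_fun_smul (by fun_prop) (by fun_prop), fderiv_fun_smul (by fun_prop) (by fun_prop)]
    simp only [add_apply, smul_apply, ContinuousLinearMap.smulRight_apply]
    rw [fd_app dφ' (by fun_prop),
      fd_appc (A := fun y => Γ y k) (by fun_prop), fd_appc dΓ,
      fd_appc dφ', fd_appc dφ', fd_appc dP, fd_appc dP]
  have := snd_symm' hV (f := fun y => fderiv ℝ φ y j)
    (hφ'.clm_apply contDiffOn_const) hx k l (hval k) (hval l)
  rw [hder, hder] at this
  simp only [M x hx] at this
  simp only [Rm, map_add, map_sub, hQ]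
  rw [Γsymm x hx l k] at *
  linear_combination (norm := module) (-1 : ℝ) • this

/-- Pointwise algebra: the tensor `Q` is a multiple of the metric. -/
lemma Q_alg (g Q : X →ₗ[ℝ] X →ₗ[ℝ] ℝ) (gs : ∀ u v, g u v = g v u)
    (gp : ∀ v, v ≠ 0 → 0 < g v v)
    (H : ∀ j k l, Q j l * g j k - Q j k * g j l + (Q k l - Q l k) * g j j = 0)
    (e : X) (he : e ≠ 0) (u v : X) : Q u v = Q e e / g e e * g u v := by
  have orth : ∀ k l, g k l = 0 → Q k l = 0 := by
    intro k l h
    by_cases hk : k = 0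
    · simp [hk]
    by_cases hl : l = 0
    · simp [hl]
    have h1 := H k k l
    have h2 := H l l k
    rw [gs l k] at h2
    rw [h] at h1 h2
    have p1 := gp k hk
    have p2 := gp l hl
    have h3 : 2 * Q k l - Q l k = 0 := by
      have : (2 * Q k l - Q l k) * g k k = 0 := by linear_combination h1
      exact (mul_eq_zero.1 this).resolve_right p1.ne'
    have h4 : 2 * Q l k - Q k l = 0 := by
      have : (2 * Q l k - Q k l) * g l l = 0 := by linear_combination h2
      exact (mul_eq_zero.1 this).resolve_right p2.ne'
    linarith
  have A : ∀ k l, Q k l * g k k = Q k k * g k l := by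
    intro k l
    have := orth k (g k k • l - g k l • k) (by simp; ring)
    simp at this
    linarith
  have B : ∀ k l, Q l k * g k k = Q k k * g k l := by
    intro k l
    have := orth (g k k • l - g k l • k) k (by simp [gs l k]; ring)
    simp at this
    linarith
  have diag : ∀ w, Q w w * g e e = Q e e * g w w := by
    intro w
    by_cases hw : g e w = 0
    · have h1 := A (e + w) e
      have h2 := A (e + w) w
      have o1 := orth e w hw
      have o2 := orth w e (by rw [gs, hw])
      simp only [map_add, LinearMap.add_apply, hw, gs w e, o1, o2, add_zero, zero_add] at h1 h2
      have pe := gp e he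
      have pw : 0 ≤ g w w := by
        by_cases h : w = 0
        · simp [h]
        · exact (gp w h).le
      have : (Q w w * g e e - Q e e * g w w) * (g e e + g w w) = 0 := by
        linear_combination g e e * h2 - g w w * h1
      have := (mul_eq_zero.1 this).resolve_right (by positivity)
      linarith
    · have h1 := A e w
      have h2 := B w e
      rw [gs w e] at h2
      have : (Q w w * g e e - Q e e * g w w) * g e w = 0 := by
        linear_combination g w w * h1 - g e e * h2
      have := (mul_eq_zero.1 this).resolve_right hw
      linarith
  have pe := gp e he
  by_cases hu : u = 0
  · simp [hu]
  have pu := gp u hu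
  have h1 := A u v
  have h2 := diag u
  field_simp
  have : (Q u v * g e e - Q e e * g u v) * g u u = 0 := by
    linear_combination g e e * h1 + g u v * h2
  have := (mul_eq_zero.1 this).resolve_right pu.ne'
  linarith

/-- The curvature function of a projectively flat metric has zero derivative. -/
lemma lam_deriv {V : Set X} (hV : IsOpen V) {P : X → X →L[ℝ] ℝ}
    {Γ : X → X →L[ℝ] X →L[ℝ] X} {g : X → X →L[ℝ] X →L[ℝ] ℝ} {lam : X → ℝ}
    (hg : ContDiffOn ℝ (⊤ : ℕ∞) g V)
    (hΓ : ContDiffOn ℝ (⊤ : ℕ∞) Γ V) (hP : ContDiffOn ℝ (⊤ : ℕ∞) P V)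
    (hlam : DifferentiableOn ℝ lam V)
    (Γsymm : ∀ x ∈ V, ∀ u v, Γ x u v = Γ x v u)
    (gsymm : ∀ x ∈ V, ∀ u v, g x u v = g x v u)
    (comp : ∀ x ∈ V, ∀ w u v, fderiv ℝ g x w u v = g x (Γ x w u) v + g x u (Γ x w v))
    (hPd : ∀ x ∈ V, ∀ l j, fderiv ℝ P x l j = P x (Γ x l j) + P x l * P x j + lam x * g x l j)
    (hR : ∀ x ∈ V, ∀ k l j, Rm Γ x k l j = lam x • (g x j l • k - g x j k • l))
    {x : X} (hx : x ∈ V) (k l j : X) :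
    fderiv ℝ lam x k * g x l j = fderiv ℝ lam x l * g x k j := by
  have dP := cdo_diff hV hP hx
  have dΓ := cdo_diff hV hΓ hx
  have dg := cdo_diff hV hg hx
  have dl := hlam.differentiableAt (hV.mem_nhds hx)
  have hval : ∀ k : X, ∀ y ∈ V, fderiv ℝ (fun y => P y j) y k =
      P y (Γ y k j) + P y k * P y j + lam y * g y k j := by
    intro k y hy
    rw [fd_appc (cdo_diff hV hP hy), hPd y hy]
  have hder : ∀ k l : X, fderiv ℝ (fun y => P y (Γ y k j) + P y k * P y j + lam y * g y k j) x l =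
      fderiv ℝ P x l (Γ x k j) + P x (fderiv ℝ Γ x l k j) +
      (P x k * fderiv ℝ P x l j + P x j * fderiv ℝ P x l k) +
      (lam x * fderiv ℝ g x l k j + g x k j * fderiv ℝ lam x l) := by
    intro k l
    rw [fderiv_fun_add (by fun_prop) (by fun_prop), fderiv_fun_add (by fun_prop) (by fun_prop),
      fderiv_fun_mul (by fun_prop) (by fun_prop), fderiv_fun_mul (by fun_prop) (by fun_prop)]
    simp only [add_apply, smul_apply, smul_eq_mul]
    rw [fd_app dP (by fun_prop),
      fd_appc (A := fun y => Γ y k) (by fun_prop), fd_appc dΓ,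
      fd_appc dP, fd_appc dP, fd_appc (A := fun y => g y k) (by fun_prop), fd_appc dg]
  have := snd_symm' hV (f := fun y => P y j)
    (hP.clm_apply contDiffOn_const) hx k l (hval k) (hval l)
  rw [hder, hder] at this
  simp only [hPd x hx, comp x hx] at this
  have hr := congrArg (P x) (hR x hx k l j)
  simp only [Rm, map_add, map_sub, map_smul, smul_eq_mul] at hr
  rw [Γsymm x hx l k, gsymm x hx k (Γ x l j), gsymm x hx l (Γ x k j)] at this
  rw [gsymm x hx j l, gsymm x hx j k] at hr
  rw [gsymm x hx l k, Γsymm x hx k l] at *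
  linear_combination -this - hr
end Geo

section Geo2
variable {X : Type*} [NormedAddCommGroup X] [NormedSpace ℝ X]
  {T : Type*} [NormedAddCommGroup T] [NormedSpace ℝ T]

/-- Projective flatness implies (locally) constant curvature. -/
lemma proj_flat_const {V : Set X} (hV : IsOpen V) {φ : X → T} {P : X → X →L[ℝ] ℝ}
    {Γ : X → X →L[ℝ] X →L[ℝ] X} {g : X → X →L[ℝ] X →L[ℝ] ℝ}
    (hdim : ∀ k : X, ∃ l : X, ∀ c : ℝ, l ≠ c • k)
    (hφ : ContDiffOn ℝ (⊤ : ℕ∞) φ V)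
    (hg : ContDiffOn ℝ (⊤ : ℕ∞) g V)
    (hΓ : ContDiffOn ℝ (⊤ : ℕ∞) Γ V) (hP : ContDiffOn ℝ (⊤ : ℕ∞) P V)
    (Γsymm : ∀ x ∈ V, ∀ u v, Γ x u v = Γ x v u)
    (gsymm : ∀ x ∈ V, ∀ u v, g x u v = g x v u)
    (gpos : ∀ x ∈ V, ∀ v, v ≠ 0 → 0 < g x v v)
    (comp : ∀ x ∈ V, ∀ w u v, fderiv ℝ g x w u v = g x (Γ x w u) v + g x u (Γ x w v))
    (inj : ∀ x ∈ V, Function.Injective (fderiv ℝ φ x))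
    (M : ∀ y ∈ V, ∀ u v, fderiv ℝ (fderiv ℝ φ) y u v = fderiv ℝ φ y (Γ y u v) +
      P y u • fderiv ℝ φ y v + P y v • fderiv ℝ φ y u) :
    ∃ lam : X → ℝ, DifferentiableOn ℝ lam V ∧ (∀ x ∈ V, fderiv ℝ lam x = 0) ∧
      ∀ x ∈ V, ∀ k l j, Rm Γ x k l j = lam x • (g x j l • k - g x j k • l) := by
  obtain ⟨e, he⟩ := hdim 0
  have he : e ≠ 0 := by simpa using he 0
  set Q : X → X → X → ℝ := fun x j l => fderiv ℝ P x l j - P x (Γ x l j) - P x l * P x j with hQ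
  have Rm1 : ∀ x ∈ V, ∀ k l j, Rm Γ x k l j =
      Q x j l • k - Q x j k • l + (Q x k l - Q x l k) • j := by
    intro x hx k l j
    apply inj x hx
    rw [Rm_of_proj hV hφ hΓ hP Γsymm M hx (Q x) (fun _ _ => rfl) k l j]
    simp only [map_add, map_sub, map_smul]
  set lam : X → ℝ := fun x => Q x e e / g x e e with hlam
  have Qlam : ∀ x ∈ V, ∀ u v, Q x u v = lam x * g x u v := by
    intro x hx u v
    let Q' : X →ₗ[ℝ] X →ₗ[ℝ] ℝ := LinearMap.mk₂ ℝ (Q x)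
      (fun a b c => by simp only [hQ, map_add]; ring)
      (fun a b c => by simp only [hQ, map_smul, smul_eq_mul]; ring)
      (fun a b c => by simp only [hQ, map_add, add_apply]; ring)
      (fun a b c => by simp only [hQ, map_smul, smul_apply, smul_eq_mul]; ring)
    let g' : X →ₗ[ℝ] X →ₗ[ℝ] ℝ := LinearMap.mk₂ ℝ (fun u v => g x u v)
      (fun a b c => by simp)
      (fun a b c => by simp)
      (fun a b c => by simp)
      (fun a b c => by simp)
    refine Q_alg g' Q' (gsymm x hx) (gpos x hx) ?_ e he u v
    intro j k l
    change Q x j l * g x j k - Q x j k * g x j l + (Q x k l - Q x l k) * g x j j = 0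
    have h1 := Rm_antisymm hV hg hΓ comp hx k l j j
    rw [gsymm x hx _ j, Rm1 x hx] at h1
    simp only [map_add, map_sub, map_smul, smul_eq_mul] at h1
    linarith
  have Rm2 : ∀ x ∈ V, ∀ k l j, Rm Γ x k l j = lam x • (g x j l • k - g x j k • l) := by
    intro x hx k l j
    rw [Rm1 x hx, Qlam x hx, Qlam x hx, Qlam x hx, Qlam x hx, gsymm x hx l k]
    module
  have dl : DifferentiableOn ℝ lam V := by
    intro x hx
    refine DifferentiableAt.differentiableWithinAt ?_
    have d1 := cdo_diff hV (cdo_fderiv hV hP) hx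
    have d2 := cdo_diff hV hP hx
    have d3 := cdo_diff hV hΓ hx
    have d4 := cdo_diff hV hg hx
    have := (gpos x hx e he).ne'
    simp only [hlam, hQ]
    fun_prop (disch := exact this)
  refine ⟨lam, dl, fun x hx => ?_, Rm2⟩
  have hd := lam_deriv hV hg hΓ hP dl Γsymm gsymm comp
    (fun x hx l j => by
      have h1 := Qlam x hx j l
      simp only [hQ] at h1
      rw [gsymm x hx l j]; linarith) Rm2 hx
  have hd2 : ∀ k l, fderiv ℝ lam x k • l = fderiv ℝ lam x l • k := by
    intro k l
    by_contra hne
    have h1 := gpos x hx _ (sub_ne_zero.2 hne)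
    have h2 := hd k l (fderiv ℝ lam x k • l - fderiv ℝ lam x l • k)
    generalize hz : fderiv ℝ lam x k • l - fderiv ℝ lam x l • k = z at h1 h2
    have h3 : g x (fderiv ℝ lam x k • l - fderiv ℝ lam x l • k) z =
        fderiv ℝ lam x k * g x l z - fderiv ℝ lam x l * g x k z := by simp
    rw [hz] at h3
    linarith
  ext k
  by_contra hk
  simp only [zero_apply] at hk
  obtain ⟨l, hl⟩ := hdim k
  apply hl ((fderiv ℝ lam x k)⁻¹ * fderiv ℝ lam x l)
  rw [mul_smul, ← hd2 k l, smul_smul, inv_mul_cancel₀ hk, one_smul]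

lemma bootstrap {W : Type*} [NormedAddCommGroup W] [NormedSpace ℝ W] {V : Set X} (hV : IsOpen V)
    {A : X → X →L[ℝ] W →L[ℝ] W} (hA : ContDiffOn ℝ (⊤ : ℕ∞) A V) {w : X → W}
    (hw : ∀ x ∈ V, HasFDerivAt w ((A x).flip (w x)) x) : ContDiffOn ℝ (⊤ : ℕ∞) w V := by
  have hflip : ContDiffOn ℝ (⊤ : ℕ∞) (fun x => (A x).flip) V :=
    (ContinuousLinearMap.flipₗᵢ ℝ X W W).contDiff.comp_contDiffOn hA
  refine contDiffOn_infty.2 fun n => ?_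
  induction n with
  | zero =>
    exact contDiffOn_zero.2 fun x hx => (hw x hx).continuousAt.continuousWithinAt
  | succ n ih =>
    have : ((n + 1 : ℕ) : WithTop ℕ∞) = (n : WithTop ℕ∞) + 1 := by norm_cast
    rw [this, contDiffOn_succ_iff_fderiv_of_isOpen hV]
    refine ⟨fun x hx => (hw x hx).differentiableAt.differentiableWithinAt, ?_, ?_⟩
    · intro h
      exact absurd h (by simp)
    · refine ContDiffOn.congr (f := fun x => (A x).flip (w x)) ?_ (fun x hx => (hw x hx).fderiv)
      exact (hflip.of_le (by exact_mod_cast le_top)).clm_apply ih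

/-- Solutions of the linear system `∇² f = - c f g`. -/
lemma exists_hess [FiniteDimensional ℝ X] [FiniteDimensional ℝ T] {U : Set X} (hU : IsOpen U)
    {Γ : X → X →L[ℝ] X →L[ℝ] X} {g : X → X →L[ℝ] X →L[ℝ] ℝ} (c : ℝ)
    (hg : ContDiffOn ℝ (⊤ : ℕ∞) g U)
    (hΓ : ContDiffOn ℝ (⊤ : ℕ∞) Γ U)
    (Γsymm : ∀ x ∈ U, ∀ u v, Γ x u v = Γ x v u)
    (gsymm : ∀ x ∈ U, ∀ u v, g x u v = g x v u)
    (comp : ∀ x ∈ U, ∀ w u v, fderiv ℝ g x w u v = g x (Γ x w u) v + g x u (Γ x w v))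
    (hR : ∀ x ∈ U, ∀ k l j, Rm Γ x k l j = c • (g x j l • k - g x j k • l))
    (x₀ : X) (hx₀ : x₀ ∈ U) (f₀ : T) (u₀ : X →L[ℝ] T) :
    ∃ (V : Set X) (f : X → T), IsOpen V ∧ x₀ ∈ V ∧ V ⊆ U ∧ ContDiffOn ℝ (⊤ : ℕ∞) f V ∧
      f x₀ = f₀ ∧ fderiv ℝ f x₀ = u₀ ∧
      ∀ x ∈ V, ∀ a b, fderiv ℝ (fderiv ℝ f) x a b =
        fderiv ℝ f x (Γ x a b) - (c * g x a b) • f x := by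
  let A : X → X →L[ℝ] (T × (X →L[ℝ] T)) →L[ℝ] (T × (X →L[ℝ] T)) := fun y =>
    LinearMap.toContinuousLinearMap
      { toFun := fun h => LinearMap.toContinuousLinearMap
          { toFun := fun w => (w.2 h, w.2 ∘L (Γ y h) - c • (g y h).smulRight w.1)
            map_add' := fun w w' => by
              ext
              · simp
              · simp; module
            map_smul' := fun r w => by
              ext
              · simp
              · simp; module }
        map_add' := fun h h' => by
          ext w
          · simp
          · simp; module
          · simp
          · simp
        map_smul' := fun r h => by
          ext w
          · simp
          · simp; module
          · simp
          · simp }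
  have Aapp : ∀ y h w, A y h w = (w.2 h, w.2 ∘L (Γ y h) - c • (g y h).smulRight w.1) :=
    fun y h w => rfl
  have hA : ContDiffOn ℝ (⊤ : ℕ∞) A U := by
    refine contDiffOn_clm_apply.2 fun h => contDiffOn_clm_apply.2 fun w => ?_
    simp only [Aapp]
    refine contDiffOn_const.prodMk ?_
    refine (contDiffOn_const.clm_comp (hΓ.clm_apply contDiffOn_const)).sub ?_
    exact ((hg.clm_apply contDiffOn_const).smulRight contDiffOn_const).const_smul c
  have hDA : ∀ x ∈ U, ∀ k h w, fderiv ℝ A x k h w =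
      (0, w.2 ∘L (fderiv ℝ Γ x k h) - c • (fderiv ℝ g x k h).smulRight w.1) := by
    intro x hx k h w
    have dA := cdo_diff hU hA hx
    have dΓ := cdo_diff hU hΓ hx
    have dg := cdo_diff hU hg hx
    rw [← fd_appc dA, ← fd_appc (A := fun y => A y h) (by fun_prop)]
    simp only [Aapp]
    have d1 : DifferentiableAt ℝ (fun y => w.2 ∘L (Γ y h) - c • (g y h).smulRight w.1) x := by
      refine contDiffOn_const (c := w.2) |>.clm_comp (hΓ.clm_apply contDiffOn_const) |>.sub
        (((hg.clm_apply contDiffOn_const).smulRight contDiffOn_const).const_smul c)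
        |> fun h => cdo_diff hU h hx
    rw [DifferentiableAt.fderiv_prodMk (by fun_prop) d1]
    ext m
    · simp
    · simp only [ContinuousLinearMap.prod_apply]
      rw [← fd_appc d1]
      simp only [sub_apply, smul_apply, ContinuousLinearMap.comp_apply,
        ContinuousLinearMap.smulRight_apply]
      rw [fderiv_fun_sub (by fun_prop) (by fun_prop), sub_apply,
        fd_app (A := fun _ => w.2) (by fun_prop) (by fun_prop),
        fd_appc (A := fun y => Γ y h) (by fun_prop), fd_appc dΓ,
        fderiv_fun_const_smul (by fun_prop), smul_apply,
        fderiv_smul_const (by fun_prop)]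
      simp only [ContinuousLinearMap.smulRight_apply]
      rw [fd_appc (A := fun y => g y h) (by fun_prop), fd_appc dg]
      simp
  have flat : ∀ x ∈ U, ∀ h k w, fderiv ℝ A x k h w + A x h (A x k w) =
      fderiv ℝ A x h k w + A x k (A x h w) := by
    intro x hx h k w
    rw [hDA x hx, hDA x hx]
    simp only [Aapp]
    refine Prod.ext ?_ ?_
    · simp [Γsymm x hx k h, gsymm x hx k h]
    · ext m
      simp only [Prod.snd_add, add_apply, sub_apply, smul_apply, ContinuousLinearMap.comp_apply,
        ContinuousLinearMap.smulRight_apply, comp x hx]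
      have hr := congrArg w.2 (hR x hx k h m)
      simp only [Rm, map_add, map_sub, map_smul] at hr
      rw [gsymm x hx m h, gsymm x hx m k] at hr
      rw [Γsymm x hx k h, gsymm x hx k (Γ x h m), gsymm x hx h (Γ x k m)]
      linear_combination (norm := module) (1 : ℝ) • hr
  obtain ⟨w, hw0, hw⟩ := frob_main A U hU hA flat x₀ hx₀ (f₀, u₀)
  obtain ⟨V, hVs, hVo, hxV⟩ := eventually_nhds_iff.1 (hw.and (hU.eventually_mem hx₀))
  have hVU : V ⊆ U := fun x hx => (hVs x hx).2
  have hws : ContDiffOn ℝ (⊤ : ℕ∞) w V := bootstrap hVo (hA.mono hVU) (fun x hx => (hVs x hx).1)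
  have hf1 : ∀ x ∈ V, fderiv ℝ (fun y => (w y).1) x = (w x).2 := by
    intro x hx
    have := (hVs x hx).1
    rw [this.fst.fderiv]
    ext v
    simp [Aapp]
  refine ⟨V, fun y => (w y).1, hVo, hxV, hVU, hws.fst, by simp [hw0], by rw [hf1 x₀ hxV, hw0], ?_⟩
  intro x hx a b
  have h1 : fderiv ℝ (fun y => (w y).1) =ᶠ[𝓝 x] fun y => (w y).2 :=
    (hVo.eventually_mem hx).mono hf1
  rw [h1.fderiv_eq, hf1 x hx, (hVs x hx).1.snd.fderiv]
  simp only [ContinuousLinearMap.comp_apply, ContinuousLinearMap.flip_apply, Aapp,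
    ContinuousLinearMap.coe_snd', sub_apply, smul_apply, ContinuousLinearMap.smulRight_apply]
  rw [mul_smul]
end Geo2

section Bridge
variable {n : ℕ} {T : Type*} [NormedAddCommGroup T] [NormedSpace ℝ T]

/-- standard basis vector -/
abbrev ee (i : Fin n) : E n := Pi.single i 1

lemma sum_ee (v : E n) : v = ∑ i, v i • ee i := by
  ext j
  simp [Finset.sum_apply, Pi.single_apply]

lemma clm_sum (f : E n →L[ℝ] T) (v : E n) : f v = ∑ i, v i • f (ee i) := by
  conv_lhs => rw [sum_ee v]
  simp

lemma lin_ext {f h : E n → T} (ha : ∀ a b, f (a + b) = f a + f b)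
    (hs : ∀ (c : ℝ) a, f (c • a) = c • f a) (ha' : ∀ a b, h (a + b) = h a + h b)
    (hs' : ∀ (c : ℝ) a, h (c • a) = c • h a) (h0 : ∀ i, f (ee i) = h (ee i)) (v : E n) :
    f v = h v := by
  let f' : E n →ₗ[ℝ] T := { toFun := f, map_add' := ha, map_smul' := hs }
  let h' : E n →ₗ[ℝ] T := { toFun := h, map_add' := ha', map_smul' := hs' }
  have : f' v = h' v := by
    rw [sum_ee v]
    simp only [map_sum, map_smul]
    exact Finset.sum_congr rfl fun i _ => by rw [show f' (ee i) = h' (ee i) from h0 i]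
  exact this

/-- bilinear map with prescribed components -/
def bilT (a : Fin n → Fin n → T) : E n →L[ℝ] E n →L[ℝ] T :=
  ∑ i, ∑ j, (ContinuousLinearMap.proj (R := ℝ) (φ := fun _ : Fin n => ℝ) i).smulRight
    ((ContinuousLinearMap.proj (R := ℝ) (φ := fun _ : Fin n => ℝ) j).smulRight (a i j))

lemma bilT_apply (a : Fin n → Fin n → T) (u v : E n) :
    bilT a u v = ∑ i, ∑ j, u i • v j • a i j := by
  simp [bilT]

lemma bilT_ee (a : Fin n → Fin n → T) (i j : Fin n) : bilT a (ee i) (ee j) = a i j := by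
  rw [bilT_apply, Finset.sum_eq_single i, Finset.sum_eq_single j]
  · simp
  · intro b _ hb; simp [hb]
  · simp
  · intro b _ hb; simp [hb]
  · simp

lemma bilT_smooth {U : Set (E n)} {a : E n → Fin n → Fin n → T}
    (ha : ∀ i j, ContDiffOn ℝ (⊤ : ℕ∞) (fun x => a x i j) U) :
    ContDiffOn ℝ (⊤ : ℕ∞) (fun x => bilT (a x)) U := by
  refine contDiffOn_clm_apply.2 fun u => contDiffOn_clm_apply.2 fun v => ?_
  simp only [bilT_apply]
  exact ContDiffOn.sum fun i _ => ContDiffOn.sum fun j _ =>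
    ((ha i j).const_smul (v j)).const_smul (u i)

lemma bilT_fderiv {U : Set (E n)} (hU : IsOpen U) {a : E n → Fin n → Fin n → T}
    (ha : ∀ i j, ContDiffOn ℝ (⊤ : ℕ∞) (fun x => a x i j) U) {x : E n} (hx : x ∈ U) (k : E n)
    (i j : Fin n) :
    fderiv ℝ (fun x => bilT (a x)) x k (ee i) (ee j) = fderiv ℝ (fun x => a x i j) x k := by
  have d := cdo_diff hU (bilT_smooth ha) hx
  rw [← fd_appc d, ← fd_appc (A := fun y => bilT (a y) (ee i)) (by fun_prop)]
  simp only [bilT_ee]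

/-- the metric as a bilinear form -/
def gB (g : E n → Matrix (Fin n) (Fin n) ℝ) (x : E n) : E n →L[ℝ] E n →L[ℝ] ℝ :=
  bilT (fun i j => g x i j)

/-- the Levi-Civita connection as a bilinear map -/
def GB (g : E n → Matrix (Fin n) (Fin n) ℝ) (x : E n) : E n →L[ℝ] E n →L[ℝ] E n :=
  bilT (fun j k => fun i => Christoffel g i j k x)


lemma gB_apply (g : E n → Matrix (Fin n) (Fin n) ℝ) (x u v : E n) :
    gB g x u v = ∑ i, ∑ j, g x i j * u i * v j := by
  rw [gB, bilT_apply]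
  refine Finset.sum_congr rfl fun i _ => Finset.sum_congr rfl fun j _ => ?_
  simp only [smul_eq_mul]; ring

lemma gB_ee (g : E n → Matrix (Fin n) (Fin n) ℝ) (x : E n) (i j : Fin n) :
    gB g x (ee i) (ee j) = g x i j := bilT_ee _ _ _

lemma gB_ee_left (g : E n → Matrix (Fin n) (Fin n) ℝ) (x : E n) (i : Fin n) (v : E n) :
    gB g x (ee i) v = ∑ m, g x i m * v m := by
  rw [clm_sum]
  refine Finset.sum_congr rfl fun m _ => ?_
  rw [gB_ee, smul_eq_mul, mul_comm]

lemma GB_ee (g : E n → Matrix (Fin n) (Fin n) ℝ) (x : E n) (i j k : Fin n) :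
    GB g x (ee j) (ee k) i = Christoffel g i j k x := by
  rw [GB, bilT_ee]

variable {U : Set (E n)} {g : E n → Matrix (Fin n) (Fin n) ℝ}

lemma gB_smooth (hg : ∀ i j : Fin n, ContDiffOn ℝ (⊤ : ℕ∞) (fun x => g x i j) U) :
    ContDiffOn ℝ (⊤ : ℕ∞) (gB g) U := bilT_smooth hg

lemma g_symm (hp : ∀ x ∈ U, (g x).PosDef) {x : E n} (hx : x ∈ U) (i j : Fin n) :
    g x i j = g x j i := by
  have := (hp x hx).isHermitian.apply i j
  simpa using this.symm

lemma gB_symm (hp : ∀ x ∈ U, (g x).PosDef) : ∀ x ∈ U, ∀ u v, gB g x u v = gB g x v u := by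
  intro x hx u v
  rw [gB_apply, gB_apply, Finset.sum_comm]
  refine Finset.sum_congr rfl fun i _ => Finset.sum_congr rfl fun j _ => ?_
  rw [g_symm hp hx]; ring

lemma gB_pos (hp : ∀ x ∈ U, (g x).PosDef) : ∀ x ∈ U, ∀ v, v ≠ 0 → 0 < gB g x v v := by
  intro x hx v hv
  have := (hp x hx).dotProduct_mulVec_pos hv
  rw [gB_apply]
  refine this.trans_eq ?_
  simp only [dotProduct, Matrix.mulVec, Pi.star_apply, star_trivial, Finset.mul_sum]
  refine Finset.sum_congr rfl fun i _ => Finset.sum_congr rfl fun j _ => ?_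
  ring

lemma pd_symm (hU : IsOpen U) (hp : ∀ x ∈ U, (g x).PosDef) {x : E n} (hx : x ∈ U)
    (i j k : Fin n) : pd k (fun x' => g x' i j) x = pd k (fun x' => g x' j i) x := by
  have : (fun x' => g x' i j) =ᶠ[𝓝 x] (fun x' => g x' j i) :=
    (hU.eventually_mem hx).mono fun y hy => g_symm hp hy i j
  rw [pd, pd, this.fderiv_eq]

lemma Chr_symm (hU : IsOpen U) (hp : ∀ x ∈ U, (g x).PosDef) {x : E n} (hx : x ∈ U)
    (i j k : Fin n) : Christoffel g i j k x = Christoffel g i k j x := by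
  rw [Christoffel, Christoffel]
  congr 1
  refine Finset.sum_congr rfl fun l _ => ?_
  rw [pd_symm hU hp hx j k l]; ring

lemma pd_smooth (hU : IsOpen U) {f : E n → ℝ} (hf : ContDiffOn ℝ (⊤ : ℕ∞) f U) (k : Fin n) :
    ContDiffOn ℝ (⊤ : ℕ∞) (pd k f) U :=
  (cdo_fderiv hU hf).clm_apply contDiffOn_const

lemma inv_smooth (hg : ∀ i j : Fin n, ContDiffOn ℝ (⊤ : ℕ∞) (fun x => g x i j) U)
    (hp : ∀ x ∈ U, (g x).PosDef) (i j : Fin n) :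
    ContDiffOn ℝ (⊤ : ℕ∞) (fun x => (g x)⁻¹ i j) U := by
  have hdet : ∀ h : E n → Matrix (Fin n) (Fin n) ℝ,
      (∀ i j : Fin n, ContDiffOn ℝ (⊤ : ℕ∞) (fun x => h x i j) U) →
      ContDiffOn ℝ (⊤ : ℕ∞) (fun x => (h x).det) U := by
    intro h hh
    simp only [Matrix.det_apply']
    exact ContDiffOn.sum fun σ _ => contDiffOn_const.mul (contDiffOn_prod fun i _ => hh _ _)
  simp only [Matrix.inv_def, Ring.inverse_eq_inv', Matrix.smul_apply, smul_eq_mul]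
  refine ((hdet g hg).inv fun x hx => (hp x hx).det_pos.ne').mul ?_
  simp only [Matrix.adjugate_apply]
  refine hdet _ fun a b => ?_
  simp only [Matrix.updateRow_apply]
  split_ifs
  · exact contDiffOn_const
  · exact hg a b

lemma Chr_smooth (hU : IsOpen U)
    (hg : ∀ i j : Fin n, ContDiffOn ℝ (⊤ : ℕ∞) (fun x => g x i j) U)
    (hp : ∀ x ∈ U, (g x).PosDef) (i j k : Fin n) :
    ContDiffOn ℝ (⊤ : ℕ∞) (Christoffel g i j k) U := by
  unfold Christoffel
  refine contDiffOn_const.mul (ContDiffOn.sum fun l _ => (inv_smooth hg hp i l).mul ?_)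
  exact ((pd_smooth hU (hg l j) k).add (pd_smooth hU (hg l k) j)).sub (pd_smooth hU (hg j k) l)

lemma Chr_smooth' (hU : IsOpen U)
    (hg : ∀ i j : Fin n, ContDiffOn ℝ (⊤ : ℕ∞) (fun x => g x i j) U)
    (hp : ∀ x ∈ U, (g x).PosDef) (j k : Fin n) :
    ContDiffOn ℝ (⊤ : ℕ∞) (fun x => fun i => Christoffel g i j k x) U :=
  contDiffOn_pi.2 fun i => Chr_smooth hU hg hp i j k

lemma GB_smooth (hU : IsOpen U)
    (hg : ∀ i j : Fin n, ContDiffOn ℝ (⊤ : ℕ∞) (fun x => g x i j) U)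
    (hp : ∀ x ∈ U, (g x).PosDef) : ContDiffOn ℝ (⊤ : ℕ∞) (GB g) U :=
  bilT_smooth (Chr_smooth' hU hg hp)

lemma GB_symm (hU : IsOpen U) (hp : ∀ x ∈ U, (g x).PosDef) :
    ∀ x ∈ U, ∀ u v, GB g x u v = GB g x v u := by
  intro x hx u v
  rw [GB, bilT_apply, bilT_apply, Finset.sum_comm]
  refine Finset.sum_congr rfl fun i _ => Finset.sum_congr rfl fun j _ => ?_
  rw [smul_comm]
  congr 2
  ext m
  exact Chr_symm hU hp hx _ _ _

lemma gB_fderiv (hU : IsOpen U)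
    (hg : ∀ i j : Fin n, ContDiffOn ℝ (⊤ : ℕ∞) (fun x => g x i j) U) {x : E n} (hx : x ∈ U)
    (i j k : Fin n) : fderiv ℝ (gB g) x (ee k) (ee i) (ee j) = pd k (fun x' => g x' i j) x :=
  bilT_fderiv hU hg hx _ i j

lemma GB_fderiv (hU : IsOpen U)
    (hg : ∀ i j : Fin n, ContDiffOn ℝ (⊤ : ℕ∞) (fun x => g x i j) U)
    (hp : ∀ x ∈ U, (g x).PosDef) {x : E n} (hx : x ∈ U)
    (i j k m : Fin n) : fderiv ℝ (GB g) x (ee k) (ee i) (ee j) m = pd k (Christoffel g m i j) x := by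
  rw [show GB g = fun x => bilT (fun j k => fun i => Christoffel g i j k x) from rfl,
    bilT_fderiv hU (Chr_smooth' hU hg hp) hx, pd]
  rw [fderiv_pi (fun i => cdo_diff hU (Chr_smooth hU hg hp _ _ _) hx)]
  rfl

lemma lower (hp : ∀ x ∈ U, (g x).PosDef) {x : E n} (hx : x ∈ U) (l j k : Fin n) :
    gB g x (ee l) (GB g x (ee j) (ee k)) = (1 / 2) * (pd k (fun x' => g x' l j) x +
      pd j (fun x' => g x' l k) x - pd l (fun x' => g x' j k) x) := by
  rw [gB_ee_left]
  simp only [GB_ee, Christoffel]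
  set w : Fin n → ℝ := fun l => pd k (fun x' => g x' l j) x +
      pd j (fun x' => g x' l k) x - pd l (fun x' => g x' j k) x with hw
  have h1 : (g x).mulVec ((g x)⁻¹.mulVec w) = w := by
    rw [Matrix.mulVec_mulVec, Matrix.mul_nonsing_inv _ (hp x hx).det_pos.ne'.isUnit,
      Matrix.one_mulVec]
  have h2 := congrFun h1 l
  simp only [Matrix.mulVec, dotProduct] at h2
  change ∑ m, g x l m * (1 / 2 * ∑ l, (g x)⁻¹ m l * w l) = 1 / 2 * w l
  rw [← h2, Finset.mul_sum]
  refine Finset.sum_congr rfl fun i _ => ?_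
  ring

lemma GB_comp (hU : IsOpen U)
    (hg : ∀ i j : Fin n, ContDiffOn ℝ (⊤ : ℕ∞) (fun x => g x i j) U)
    (hp : ∀ x ∈ U, (g x).PosDef) :
    ∀ x ∈ U, ∀ w u v, fderiv ℝ (gB g) x w u v =
      gB g x (GB g x w u) v + gB g x u (GB g x w v) := by
  intro x hx w u v
  refine lin_ext (f := fun w => fderiv ℝ (gB g) x w u v)
    (h := fun w => gB g x (GB g x w u) v + gB g x u (GB g x w v)) ?_ ?_ ?_ ?_ (fun k => ?_) w
  · intros; simp
  · intros; simp
  · intros; simp; ring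
  · intros; simp; ring
  refine lin_ext (f := fun u => fderiv ℝ (gB g) x (ee k) u v)
    (h := fun u => gB g x (GB g x (ee k) u) v + gB g x u (GB g x (ee k) v))
    ?_ ?_ ?_ ?_ (fun i => ?_) u
  · intros; simp
  · intros; simp
  · intros; simp; ring
  · intros; simp; ring
  refine lin_ext (f := fun v => fderiv ℝ (gB g) x (ee k) (ee i) v)
    (h := fun v => gB g x (GB g x (ee k) (ee i)) v + gB g x (ee i) (GB g x (ee k) v))
    ?_ ?_ ?_ ?_ (fun j => ?_) v
  · intros; simp
  · intros; simp
  · intros; simp; ring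
  · intros; simp; ring
  rw [gB_fderiv hU hg hx, gB_symm hp x hx _ (ee j), lower hp hx, lower hp hx,
    pd_symm hU hp hx j i k, pd_symm hU hp hx j k i, pd_symm hU hp hx i k j]
  ring

lemma Rm_ee (hU : IsOpen U)
    (hg : ∀ i j : Fin n, ContDiffOn ℝ (⊤ : ℕ∞) (fun x => g x i j) U)
    (hp : ∀ x ∈ U, (g x).PosDef) {x : E n} (hx : x ∈ U) (i j k l : Fin n) :
    gB g x (ee i) (Rm (GB g) x (ee k) (ee l) (ee j)) = RiemLow g i j k l x := by
  rw [gB_ee_left, RiemLow]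
  refine Finset.sum_congr rfl fun m _ => ?_
  congr 1
  rw [Rm, RiemUp]
  simp only [Pi.add_apply, Pi.sub_apply]
  rw [GB_fderiv hU hg hp hx, GB_fderiv hU hg hp hx, clm_sum (GB g x (ee k)) (GB g x _ _),
    clm_sum (GB g x (ee l)) (GB g x _ _), Finset.sum_sub_distrib]
  simp only [Finset.sum_apply, Pi.smul_apply, GB_ee, smul_eq_mul]
  simp only [mul_comm]
  ring

lemma Rm_of_index (hU : IsOpen U)
    (hg : ∀ i j : Fin n, ContDiffOn ℝ (⊤ : ℕ∞) (fun x => g x i j) U)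
    (hp : ∀ x ∈ U, (g x).PosDef) {x : E n} (hx : x ∈ U) (c : ℝ)
    (h : ∀ i j k l, RiemLow g i j k l x = c * (g x i k * g x j l - g x i l * g x j k))
    (k l j : E n) : Rm (GB g) x k l j = c • (gB g x j l • k - gB g x j k • l) := by
  have key : ∀ v : E n, (∀ i, gB g x (ee i) v = 0) → v = 0 := by
    intro v hv
    by_contra hne
    have := gB_pos hp x hx v hne
    rw [gB_symm hp x hx, clm_sum] at this
    simp [gB_symm hp x hx v, hv] at this
  refine lin_ext (f := fun k => Rm (GB g) x k l j)
    (h := fun k => c • (gB g x j l • k - gB g x j k • l)) ?_ ?_ ?_ ?_ (fun k => ?_) k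
  · intros; simp [Rm]; module
  · intros; simp [Rm]; module
  · intros; simp; module
  · intros; simp; module
  refine lin_ext (f := fun l => Rm (GB g) x (ee k) l j)
    (h := fun l => c • (gB g x j l • (ee k) - gB g x j (ee k) • l)) ?_ ?_ ?_ ?_ (fun l => ?_) l
  · intros; simp only [Rm, map_add, add_apply]; module
  · intros; simp only [Rm, map_smul, smul_apply]; module
  · intros; simp only [map_add]; module
  · intros; simp only [map_smul, smul_eq_mul]; module
  refine lin_ext (f := fun j => Rm (GB g) x (ee k) (ee l) j)
    (h := fun j => c • (gB g x j (ee l) • (ee k) - gB g x j (ee k) • (ee l)))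
    ?_ ?_ ?_ ?_ (fun j => ?_) j
  · intros; simp only [Rm, map_add]; module
  · intros; simp only [Rm, map_smul]; module
  · intros; simp only [map_add, add_apply]; module
  · intros; simp only [map_smul, smul_apply, smul_eq_mul]; module
  refine sub_eq_zero.1 (key _ fun i => ?_)
  rw [map_sub, Rm_ee hU hg hp hx, h]
  simp only [map_smul, map_sub, gB_ee, smul_eq_mul]
  ring
end Bridge

section Hamel
variable {n : ℕ}

lemma sum_mul_ee (A : E n →L[ℝ] ℝ) (v : E n) : ∑ k, A (ee k) * v k = A v := by
  rw [clm_sum A v]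
  exact Finset.sum_congr rfl fun i _ => by rw [smul_eq_mul, mul_comm]

lemma hasf_q {G : E n → E n →L[ℝ] E n →L[ℝ] ℝ} {p : E n × E n}
    (hG : DifferentiableAt ℝ G p.1) :
    ∃ L : E n × E n →L[ℝ] ℝ, HasFDerivAt (fun p : E n × E n => G p.1 p.2 p.2) L p ∧
      ∀ a b, L (a, b) = fderiv ℝ G p.1 a p.2 p.2 + G p.1 b p.2 + G p.1 p.2 b := by
  have h1 : HasFDerivAt (fun p : E n × E n => G p.1) _ p := hG.hasFDerivAt.comp p hasFDerivAt_fst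
  have h2 := (h1.clm_apply (hasFDerivAt_snd (p := p))).clm_apply (hasFDerivAt_snd (p := p))
  refine ⟨_, h2, fun a b => ?_⟩
  simp
  ring

lemma hasf_h {G : E n → E n →L[ℝ] E n →L[ℝ] ℝ} {p : E n × E n}
    (hG : DifferentiableAt ℝ G p.1) (v : E n) :
    ∃ L : E n × E n →L[ℝ] ℝ, HasFDerivAt (fun p : E n × E n => G p.1 v p.2) L p ∧
      ∀ a b, L (a, b) = fderiv ℝ G p.1 a v p.2 + G p.1 v b := by
  have h1 : HasFDerivAt (fun p : E n × E n => G p.1) _ p := hG.hasFDerivAt.comp p hasFDerivAt_fst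
  have h2 := (h1.clm_apply (hasFDerivAt_const v p)).clm_apply (hasFDerivAt_snd (p := p))
  refine ⟨_, h2, fun a b => ?_⟩
  simp
  ring

lemma hamel_iff {W : Set (E n)} (hW : IsOpen W) {G : E n → E n →L[ℝ] E n →L[ℝ] ℝ}
    (hG : ContDiffOn ℝ (⊤ : ℕ∞) G W) (Gs : ∀ z ∈ W, ∀ u v, G z u v = G z v u)
    (Gp : ∀ z ∈ W, ∀ v, v ≠ 0 → 0 < G z v v) {Fb : E n × E n → ℝ}
    (hF : ∀ z ∈ W, ∀ η, Fb (z, η) = Real.sqrt (G z η η)) {z : E n} (hz : z ∈ W) {η : E n}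
    (hη : η ≠ 0) :
    (∀ i : Fin n, ∑ k, pdx k (pdy i Fb) (z, η) * η k = ∑ k, pdx i (pdy k Fb) (z, η) * η k) ↔
    ∃ s : ℝ, ∀ v, fderiv ℝ G z η v η - (1 / 2) * fderiv ℝ G z v η η = s * G z v η := by
  set O : Set (E n × E n) := {p | p.1 ∈ W ∧ p.2 ≠ 0} with hO
  have hOo : IsOpen O :=
    (hW.preimage continuous_fst).inter ((isOpen_compl_singleton (x := (0 : E n))).preimage
      continuous_snd)
  have sq : ∀ p ∈ O, ∃ L : E n × E n →L[ℝ] ℝ,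
      HasFDerivAt (fun p : E n × E n => Real.sqrt (G p.1 p.2 p.2)) L p ∧
      ∀ a b, L (a, b) = (fderiv ℝ G p.1 a p.2 p.2 + 2 * G p.1 b p.2) /
        (2 * Real.sqrt (G p.1 p.2 p.2)) := by
    intro p hp
    obtain ⟨L, hL, hL2⟩ := hasf_q (cdo_diff hW hG hp.1)
    refine ⟨_, hL.sqrt (Gp p.1 hp.1 p.2 hp.2).ne', fun a b => ?_⟩
    rw [smul_apply, hL2, Gs p.1 hp.1 p.2 b, smul_eq_mul]
    ring
  have e1 : ∀ p ∈ O, Fb =ᶠ[𝓝 p] fun p : E n × E n => Real.sqrt (G p.1 p.2 p.2) := fun p hp =>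
    (hOo.eventually_mem hp).mono fun q hq => hF q.1 hq.1 q.2
  have e2 : ∀ i, ∀ p ∈ O, pdy i Fb p = G p.1 (ee i) p.2 / Real.sqrt (G p.1 p.2 p.2) := by
    intro i p hp
    obtain ⟨L, hL, hL2⟩ := sq p hp
    rw [pdy, (e1 p hp).fderiv_eq, hL.fderiv, hL2]
    simp only [map_zero, zero_apply]
    have := (Real.sqrt_pos.2 (Gp p.1 hp.1 p.2 hp.2)).ne'
    field_simp
    ring
  have hzO : (z, η) ∈ O := ⟨hz, hη⟩
  have hpos := Gp z hz η hη
  set r := Real.sqrt (G z η η) with hr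
  have hrp : 0 < r := Real.sqrt_pos.2 hpos
  have hr2 : r ^ 2 = G z η η := Real.sq_sqrt hpos.le
  have e3 : ∀ i k, pdx k (pdy i Fb) (z, η) = fderiv ℝ G z (ee k) (ee i) η / r -
      G z (ee i) η * fderiv ℝ G z (ee k) η η / (2 * r ^ 3) := by
    intro i k
    have : pdy i Fb =ᶠ[𝓝 (z, η)] fun p : E n × E n =>
        G p.1 (ee i) p.2 / Real.sqrt (G p.1 p.2 p.2) :=
      (hOo.eventually_mem hzO).mono fun q hq => e2 i q hq
    obtain ⟨L, hL, hL2⟩ := sq _ hzO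
    obtain ⟨K, hK, hK2⟩ := hasf_h (p := (z, η)) (cdo_diff hW hG hz) (ee i)
    have hd : HasFDerivAt (fun p : E n × E n => G p.1 (ee i) p.2 / Real.sqrt (G p.1 p.2 p.2))
        _ (z, η) := hK.mul ((hasDerivAt_inv hrp.ne').comp_hasFDerivAt (z, η) hL)
    rw [pdx, this.fderiv_eq, hd.fderiv]
    simp only [smul_apply, add_apply, hL2, hK2, map_zero, zero_apply,
      smul_eq_mul]
    rw [← hr]
    field_simp
    ring
  have e4 : ∀ i, ∑ k, pdx k (pdy i Fb) (z, η) * η k = fderiv ℝ G z η (ee i) η / r -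
      G z (ee i) η * fderiv ℝ G z η η η / (2 * r ^ 3) := by
    intro i
    simp only [e3]
    have h1 := sum_mul_ee (((fderiv ℝ G z).flip (ee i)).flip η) η
    have h2 := sum_mul_ee (((fderiv ℝ G z).flip η).flip η) η
    simp only [ContinuousLinearMap.flip_apply] at h1 h2
    rw [← h1, ← h2, Finset.sum_div, Finset.mul_sum, Finset.sum_div, ← Finset.sum_sub_distrib]
    refine Finset.sum_congr rfl fun k _ => ?_
    ring
  have e5 : ∀ i, ∑ k, pdx i (pdy k Fb) (z, η) * η k = fderiv ℝ G z (ee i) η η / (2 * r) := by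
    intro i
    simp only [e3]
    have h1 := sum_mul_ee ((fderiv ℝ G z (ee i)).flip η) η
    have h2 := sum_mul_ee ((G z).flip η) η
    simp only [ContinuousLinearMap.flip_apply] at h1 h2
    have : fderiv ℝ G z (ee i) η η / (2 * r) = fderiv ℝ G z (ee i) η η / r -
      G z η η * fderiv ℝ G z (ee i) η η / (2 * r ^ 3) := by
      rw [← hr2]; field_simp; ring
    rw [this]
    generalize fderiv ℝ G z (ee i) η η = D at h1 ⊢
    rw [← h2]
    conv_rhs => enter [1]; rw [← h1]
    rw [Finset.sum_div, Finset.sum_mul, Finset.sum_div, ← Finset.sum_sub_distrib]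
    refine Finset.sum_congr rfl fun k _ => ?_
    ring
  simp only [e4, e5]
  constructor
  · intro h
    refine ⟨fderiv ℝ G z η η η / (2 * r ^ 2), fun v => ?_⟩
    refine lin_ext (f := fun v => fderiv ℝ G z η v η - (1 / 2) * fderiv ℝ G z v η η)
      (h := fun v => fderiv ℝ G z η η η / (2 * r ^ 2) * G z v η) ?_ ?_ ?_ ?_ (fun i => ?_) v
    · intros; simp; ring
    · intros; simp; ring
    · intros; simp; ring
    · intros; simp; ring
    have := h i
    field_simp at this ⊢
    linarith
  · rintro ⟨s, hs⟩ i
    have h1 := hs η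
    have h2 := hs (ee i)
    rw [← hr2] at h1
    have h3 : fderiv ℝ G z η η η = 2 * s * r ^ 2 := by linarith
    have h4 : fderiv ℝ G z η (ee i) η = s * G z (ee i) η + 1 / 2 * fderiv ℝ G z (ee i) η η := by
      linarith
    rw [h3, h4]
    field_simp
    ring
end Hamel

section Transf
variable {X : Type*} [NormedAddCommGroup X] [NormedSpace ℝ X]

lemma transf_iff {V W : Set X} (hV : IsOpen V) (hW : IsOpen W)
    {G g : X → X →L[ℝ] X →L[ℝ] ℝ} {Γ : X → X →L[ℝ] X →L[ℝ] X} {φ : X → X}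
    (hφ : ContDiffOn ℝ (⊤ : ℕ∞) φ V) (hmap : ∀ x ∈ V, φ x ∈ W)
    (hG : ContDiffOn ℝ (⊤ : ℕ∞) G W) (Gs : ∀ z ∈ W, ∀ u v, G z u v = G z v u)
    (Gp : ∀ z ∈ W, ∀ v, v ≠ 0 → 0 < G z v v)
    (hgG : ∀ x ∈ V, ∀ u v, g x u v = G (φ x) (fderiv ℝ φ x u) (fderiv ℝ φ x v))
    (hg : ContDiffOn ℝ (⊤ : ℕ∞) g V)
    (Γs : ∀ x ∈ V, ∀ u v, Γ x u v = Γ x v u)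
    (comp : ∀ x ∈ V, ∀ w u v, fderiv ℝ g x w u v = g x (Γ x w u) v + g x u (Γ x w v))
    {x : X} (hx : x ∈ V) (surj : Function.Surjective (fderiv ℝ φ x)) (y : X) :
    (∃ s : ℝ, ∀ v, fderiv ℝ G (φ x) (fderiv ℝ φ x y) v (fderiv ℝ φ x y) -
      (1 / 2) * fderiv ℝ G (φ x) v (fderiv ℝ φ x y) (fderiv ℝ φ x y) =
        s * G (φ x) v (fderiv ℝ φ x y)) ↔
    ∃ s : ℝ, fderiv ℝ (fderiv ℝ φ) x y y = fderiv ℝ φ x (Γ x y y) + s • fderiv ℝ φ x y := by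
  have hz := hmap x hx
  have dφ := cdo_diff hV hφ hx
  have dφ' := cdo_diff hV (cdo_fderiv hV hφ) hx
  have dG := cdo_diff hW hG hz
  have dg := cdo_diff hV hg hx
  have dGφ : DifferentiableAt ℝ (fun x => G (φ x)) x := dG.comp x dφ
  have fdGφ : ∀ w, fderiv ℝ (fun x => G (φ x)) x w = fderiv ℝ G (φ x) (fderiv ℝ φ x w) := by
    intro w
    rw [show (fun x => G (φ x)) = G ∘ φ from rfl, fderiv_comp x dG dφ]
    rfl
  have Dg : ∀ w u v, fderiv ℝ g x w u v =
      fderiv ℝ G (φ x) (fderiv ℝ φ x w) (fderiv ℝ φ x u) (fderiv ℝ φ x v) +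
      G (φ x) (fderiv ℝ (fderiv ℝ φ) x w u) (fderiv ℝ φ x v) +
      G (φ x) (fderiv ℝ φ x u) (fderiv ℝ (fderiv ℝ φ) x w v) := by
    intro w u v
    rw [← fd_appc dg, ← fd_appc (A := fun y => g y u) (by fun_prop)]
    have : (fun y => g y u v) =ᶠ[𝓝 x]
        fun y => G (φ y) (fderiv ℝ φ y u) (fderiv ℝ φ y v) :=
      (hV.eventually_mem hx).mono fun y hy => hgG y hy u v
    rw [this.fderiv_eq, fd_app (A := fun y => G (φ y) (fderiv ℝ φ y u)) (by fun_prop)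
      (by fun_prop), fd_app (A := fun y => G (φ y)) (by fun_prop) (by fun_prop),
      fd_appc dφ', fd_appc dφ', fdGφ]
    simp only [add_apply]
  have key : ∀ w, fderiv ℝ G (φ x) (fderiv ℝ φ x y) (fderiv ℝ φ x w) (fderiv ℝ φ x y) -
      (1 / 2) * fderiv ℝ G (φ x) (fderiv ℝ φ x w) (fderiv ℝ φ x y) (fderiv ℝ φ x y) =
      G (φ x) (fderiv ℝ φ x w) (fderiv ℝ φ x (Γ x y y) - fderiv ℝ (fderiv ℝ φ) x y y) := by
    intro w
    have h1 := Dg y w y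
    have h2 := Dg w y y
    rw [comp x hx] at h1 h2
    rw [Gs _ hz (fderiv ℝ φ x y)] at h2
    rw [hgG x hx, hgG x hx] at h1 h2
    rw [Gs _ hz (fderiv ℝ φ x y) (fderiv ℝ φ x _)] at h2
    rw [snd_symm hV hφ hx y w, Γs x hx y w] at h1
    rw [map_sub]
    linarith
  constructor
  · rintro ⟨s, hs⟩
    refine ⟨-s, ?_⟩
    set d := fderiv ℝ φ x (Γ x y y) - fderiv ℝ (fderiv ℝ φ) x y y with hd
    have h0 : d - s • fderiv ℝ φ x y = 0 := by
      by_contra hne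
      have hp := Gp _ hz _ hne
      obtain ⟨w, hw⟩ := surj (d - s • fderiv ℝ φ x y)
      have h1 := key w
      rw [hs, hw] at h1
      rw [map_sub (G (φ x) _), map_smul (G (φ x) _), smul_eq_mul] at hp
      linarith
    have : fderiv ℝ (fderiv ℝ φ) x y y = fderiv ℝ φ x (Γ x y y) - d := by rw [hd]; abel
    rw [this, sub_eq_zero.1 h0]
    module
  · rintro ⟨s, hs⟩
    refine ⟨-s, fun v => ?_⟩
    obtain ⟨w, rfl⟩ := surj v
    rw [key w, hs, map_sub, map_add, map_smul, smul_eq_mul]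
    ring
end Transf

section Fwd
variable {n : ℕ}

/-- the metric in the new coordinates -/
def Gt (g : E n → Matrix (Fin n) (Fin n) ℝ) (ψ : E n → E n) (z : E n) : E n →L[ℝ] E n →L[ℝ] ℝ :=
  (gB g (ψ z)).bilinearComp (fderiv ℝ ψ z) (fderiv ℝ ψ z)

lemma Gt_apply (g : E n → Matrix (Fin n) (Fin n) ℝ) (ψ : E n → E n) (z u v : E n) :
    Gt g ψ z u v = gB g (ψ z) (fderiv ℝ ψ z u) (fderiv ℝ ψ z v) := rfl

lemma inv_deriv {V : Set (E n)} {φ ψ : E n → E n} (hV : IsOpen V)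
    (hφ : ContDiffOn ℝ (⊤ : ℕ∞) φ V) (hW : IsOpen (φ '' V))
    (hψ : ContDiffOn ℝ (⊤ : ℕ∞) ψ (φ '' V)) (hi : ∀ x ∈ V, ψ (φ x) = x) {x : E n} (hx : x ∈ V) :
    (∀ y, fderiv ℝ ψ (φ x) (fderiv ℝ φ x y) = y) ∧
    (∀ y, fderiv ℝ φ x (fderiv ℝ ψ (φ x) y) = y) := by
  have dφ := cdo_diff hV hφ hx
  have hz : φ x ∈ φ '' V := ⟨x, hx, rfl⟩
  have dψ := cdo_diff hW hψ hz
  constructor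
  · intro y
    have h1 : ψ ∘ φ =ᶠ[𝓝 x] id := (hV.eventually_mem hx).mono fun y hy => hi y hy
    have h2 := h1.fderiv_eq (𝕜 := ℝ)
    rw [fderiv_comp x dψ dφ, fderiv_id] at h2
    exact DFunLike.congr_fun h2 y
  · intro y
    have h1 : φ ∘ ψ =ᶠ[𝓝 (φ x)] id := (hW.eventually_mem hz).mono fun z hz => by
      obtain ⟨y, hy, rfl⟩ := hz
      simp [hi y hy]
    have h2 := h1.fderiv_eq (𝕜 := ℝ)
    rw [fderiv_comp (φ x) (by rwa [hi x hx]) dψ, fderiv_id, hi x hx] at h2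
    exact DFunLike.congr_fun h2 y

lemma Gt_smooth {U V : Set (E n)} {g : E n → Matrix (Fin n) (Fin n) ℝ}
    (hg : ∀ i j : Fin n, ContDiffOn ℝ (⊤ : ℕ∞) (fun x => g x i j) U) (hVU : V ⊆ U)
    {φ ψ : E n → E n} (hW : IsOpen (φ '' V))
    (hψ : ContDiffOn ℝ (⊤ : ℕ∞) ψ (φ '' V)) (hi : ∀ x ∈ V, ψ (φ x) = x) :
    ContDiffOn ℝ (⊤ : ℕ∞) (Gt g ψ) (φ '' V) := by
  refine contDiffOn_clm_apply.2 fun u => contDiffOn_clm_apply.2 fun v => ?_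
  simp only [Gt_apply]
  have h1 : ContDiffOn ℝ (⊤ : ℕ∞) (fun z => gB g (ψ z)) (φ '' V) :=
    (gB_smooth hg).comp hψ (fun z hz => by
      obtain ⟨y, hy, rfl⟩ := hz
      rw [hi y hy]; exact hVU hy)
  have h2 := cdo_fderiv hW hψ
  exact (h1.clm_apply (h2.clm_apply contDiffOn_const)).clm_apply (h2.clm_apply contDiffOn_const)

lemma Gt_symm {U V : Set (E n)} {g : E n → Matrix (Fin n) (Fin n) ℝ}
    (hp : ∀ x ∈ U, (g x).PosDef) (hVU : V ⊆ U)
    {φ ψ : E n → E n} (hi : ∀ x ∈ V, ψ (φ x) = x) :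
    ∀ z ∈ φ '' V, ∀ u v, Gt g ψ z u v = Gt g ψ z v u := by
  rintro _ ⟨x, hx, rfl⟩ u v
  rw [Gt_apply, Gt_apply, hi x hx, gB_symm hp x (hVU hx)]

lemma Gt_pos {U V : Set (E n)} {g : E n → Matrix (Fin n) (Fin n) ℝ}
    (hp : ∀ x ∈ U, (g x).PosDef) (hV : IsOpen V) (hVU : V ⊆ U)
    {φ ψ : E n → E n} (hφ : ContDiffOn ℝ (⊤ : ℕ∞) φ V) (hW : IsOpen (φ '' V))
    (hψ : ContDiffOn ℝ (⊤ : ℕ∞) ψ (φ '' V)) (hi : ∀ x ∈ V, ψ (φ x) = x) :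
    ∀ z ∈ φ '' V, ∀ v, v ≠ 0 → 0 < Gt g ψ z v v := by
  rintro _ ⟨x, hx, rfl⟩ v hv
  rw [Gt_apply, hi x hx]
  refine gB_pos hp x (hVU hx) _ fun h0 => hv ?_
  rw [← (inv_deriv hV hφ hW hψ hi hx).2 v, h0, map_zero]

lemma pack {U V : Set (E n)} (hU : IsOpen U) {g : E n → Matrix (Fin n) (Fin n) ℝ}
    (hg : ∀ i j : Fin n, ContDiffOn ℝ (⊤ : ℕ∞) (fun x => g x i j) U)
    (hp : ∀ x ∈ U, (g x).PosDef) (hV : IsOpen V) (hVU : V ⊆ U)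
    {φ ψ : E n → E n} (hφ : ContDiffOn ℝ (⊤ : ℕ∞) φ V) (hW : IsOpen (φ '' V))
    (hψ : ContDiffOn ℝ (⊤ : ℕ∞) ψ (φ '' V)) (hi : ∀ x ∈ V, ψ (φ x) = x)
    {Fb : E n × E n → ℝ}
    (hF : ∀ z ∈ φ '' V, ∀ η, Fb (z, η) = Real.sqrt (Gt g ψ z η η)) {x : E n} (hx : x ∈ V)
    {y : E n} (hy : fderiv ℝ φ x y ≠ 0) :
    (∀ i : Fin n, ∑ k, pdx k (pdy i Fb) (φ x, fderiv ℝ φ x y) * fderiv ℝ φ x y k =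
      ∑ k, pdx i (pdy k Fb) (φ x, fderiv ℝ φ x y) * fderiv ℝ φ x y k) ↔
    ∃ s : ℝ, fderiv ℝ (fderiv ℝ φ) x y y = fderiv ℝ φ x (GB g x y y) + s • fderiv ℝ φ x y := by
  have hGs := Gt_smooth hg hVU hW hψ hi
  have hGy := Gt_symm hp hVU hi
  have hGp := Gt_pos hp hV hVU hφ hW hψ hi
  rw [hamel_iff hW hGs hGy hGp hF ⟨x, hx, rfl⟩ hy]
  refine transf_iff hV hW (g := gB g) (Γ := GB g) hφ (fun x hx => ⟨x, hx, rfl⟩) hGs hGy hGp ?_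
    ((gB_smooth hg).mono hVU) (fun x hx => GB_symm hU hp x (hVU hx))
    (fun x hx => GB_comp hU hg hp x (hVU hx)) hx ?_ y
  · intro x hx u v
    have h := (inv_deriv hV hφ hW hψ hi hx).1
    rw [Gt_apply, hi x hx, h, h]
  · intro z
    exact ⟨_, (inv_deriv hV hφ hW hψ hi hx).2 z⟩

lemma exists_coord {U : Set (E n)} (hU : IsOpen U) {g : E n → Matrix (Fin n) (Fin n) ℝ}
    (hg : ∀ i j : Fin n, ContDiffOn ℝ (⊤ : ℕ∞) (fun x => g x i j) U)
    (hp : ∀ x ∈ U, (g x).PosDef) (c : ℝ)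
    (hR : ∀ x ∈ U, ∀ k l j, Rm (GB g) x k l j = c • (gB g x j l • k - gB g x j k • l))
    {x₀ : E n} (hx₀ : x₀ ∈ U) :
    ∃ (V : Set (E n)) (φ ψ : E n → E n), IsOpen V ∧ x₀ ∈ V ∧ V ⊆ U ∧
        ContDiffOn ℝ (⊤ : ℕ∞) φ V ∧ IsOpen (φ '' V) ∧ ContDiffOn ℝ (⊤ : ℕ∞) ψ (φ '' V) ∧
        (∀ x ∈ V, ψ (φ x) = x) ∧
        ∀ x ∈ V, ∀ y, ∃ s : ℝ, fderiv ℝ (fderiv ℝ φ) x y y =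
          fderiv ℝ φ x (GB g x y y) + s • fderiv ℝ φ x y := by
  obtain ⟨V1, f0, hV1, hx1, hV1U, hf0, hf0x, hdf0x, hess0⟩ := exists_hess (T := ℝ) hU c
    (gB_smooth hg) (GB_smooth hU hg hp) (GB_symm hU hp) (gB_symm hp) (GB_comp hU hg hp) hR
    x₀ hx₀ 1 0
  obtain ⟨V2, f, hV2, hx2, hV2U, hf, hfx, hdfx, hess⟩ := exists_hess (T := E n) hU c
    (gB_smooth hg) (GB_smooth hU hg hp) (GB_symm hU hp) (gB_symm hp) (GB_comp hU hg hp) hR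
    x₀ hx₀ 0 (ContinuousLinearMap.id ℝ (E n))
  set V3 : Set (E n) := V2 ∩ (V1 ∩ f0 ⁻¹' {0}ᶜ) with hV3
  have hV3o : IsOpen V3 :=
    hV2.inter (hf0.continuousOn.isOpen_inter_preimage hV1 isOpen_compl_singleton)
  have hx3 : x₀ ∈ V3 := ⟨hx2, hx1, by simp [hf0x]⟩
  have ne0 : ∀ x ∈ V3, f0 x ≠ 0 := fun x hx => hx.2.2
  have hf0' : ContDiffOn ℝ (⊤ : ℕ∞) f0 V3 := hf0.mono fun x hx => hx.2.1
  have hf' : ContDiffOn ℝ (⊤ : ℕ∞) f V3 := hf.mono fun x hx => hx.1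
  set φ : E n → E n := fun x => (f0 x)⁻¹ • f x with hφd
  have hφ : ContDiffOn ℝ (⊤ : ℕ∞) φ V3 := (hf0'.inv ne0).smul hf'
  have hfφ : ∀ x ∈ V3, f x = f0 x • φ x := by
    intro x hx
    simp only [hφd, smul_smul, mul_inv_cancel₀ (ne0 x hx), one_smul]
  have hDf : ∀ x ∈ V3, ∀ v, fderiv ℝ f x v = f0 x • fderiv ℝ φ x v + fderiv ℝ f0 x v • φ x := by
    intro x hx v
    have h1 : f =ᶠ[𝓝 x] fun y => f0 y • φ y := (hV3o.eventually_mem hx).mono hfφ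
    rw [h1.fderiv_eq, fderiv_fun_smul (cdo_diff hV3o hf0' hx) (cdo_diff hV3o hφ hx)]
    simp
  have hM : ∀ x ∈ V3, ∀ y, ∃ s : ℝ, fderiv ℝ (fderiv ℝ φ) x y y =
          fderiv ℝ φ x (GB g x y y) + s • fderiv ℝ φ x y := by
    intro x hx y
    have d0 := cdo_diff hV3o hf0' hx
    have d0' := cdo_diff hV3o (cdo_fderiv hV3o hf0') hx
    have d1 := cdo_diff hV3o hφ hx
    have d1' := cdo_diff hV3o (cdo_fderiv hV3o hφ) hx
    have d2' := cdo_diff hV3o (cdo_fderiv hV3o hf') hx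
    have h1 : (fun z => fderiv ℝ f z y) =ᶠ[𝓝 x]
        fun z => f0 z • fderiv ℝ φ z y + fderiv ℝ f0 z y • φ z :=
      (hV3o.eventually_mem hx).mono fun z hz => hDf z hz y
    have h2 := DFunLike.congr_fun (h1.fderiv_eq (𝕜 := ℝ)) y
    rw [fd_appc d2', fderiv_fun_add (by fun_prop) (by fun_prop),
      fderiv_fun_smul d0 (by fun_prop), fderiv_fun_smul (by fun_prop) d1] at h2
    simp only [add_apply, smul_apply, ContinuousLinearMap.smulRight_apply] at h2
    rw [fd_appc d1', fd_appc d0', hess x hx.1, hess0 x hx.2.1, hDf x hx, hfφ x hx] at h2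
    refine ⟨-(2 * (f0 x)⁻¹ * fderiv ℝ f0 x y), ?_⟩
    have h3 : f0 x • (fderiv ℝ (fderiv ℝ φ) x y y) = f0 x • (fderiv ℝ φ x (GB g x y y)) -
        (2 * fderiv ℝ f0 x y) • fderiv ℝ φ x y := by
      simp only [smul_eq_mul] at h2
      linear_combination (norm := module) (-1 : ℝ) • h2
    have h4 := congrArg (fun z => (f0 x)⁻¹ • z) h3
    simp only [smul_sub, smul_smul, inv_mul_cancel₀ (ne0 x hx), one_smul] at h4
    rw [h4]
    module
  have hDφ0 : fderiv ℝ φ x₀ = ContinuousLinearMap.id ℝ (E n) := by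
    ext1 v
    have := hDf x₀ hx3 v
    rw [hdfx, hdf0x, hf0x] at this
    simpa using this.symm
  have hcd : ContDiffAt ℝ (⊤ : ℕ∞) φ x₀ := hφ.contDiffAt (hV3o.mem_nhds hx3)
  have hfd : HasFDerivAt φ ((ContinuousLinearEquiv.refl ℝ (E n) : E n ≃L[ℝ] E n) :
      E n →L[ℝ] E n) x₀ := by
    have := (cdo_diff hV3o hφ hx3).hasFDerivAt
    rw [hDφ0] at this
    exact this
  set e := hcd.toOpenPartialHomeomorph φ hfd (by simp) with he
  have hecoe : ∀ x, e x = φ x := fun x => rfl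
  have hes : x₀ ∈ e.source := hcd.mem_toOpenPartialHomeomorph_source hfd (by simp)
  set V : Set (E n) := e.source ∩ (V3 ∩ fderiv ℝ φ ⁻¹'
    (Set.range ((↑) : (E n ≃L[ℝ] E n) → E n →L[ℝ] E n))) with hV
  have hVo : IsOpen V := e.open_source.inter
    ((cdo_fderiv hV3o hφ).continuousOn.isOpen_inter_preimage hV3o ContinuousLinearEquiv.isOpen)
  have hVV3 : V ⊆ V3 := fun x hx => hx.2.1
  refine ⟨V, φ, e.symm, hVo, ⟨hes, hx3, ?_⟩, fun x hx => hV2U (hVV3 hx).1, hφ.mono hVV3, ?_, ?_,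
    ?_, fun x hx y => hM x (hVV3 hx) y⟩
  · exact ⟨ContinuousLinearEquiv.refl ℝ (E n), by rw [hDφ0]; rfl⟩
  · exact e.isOpen_image_of_subset_source hVo (fun x hx => hx.1)
  · rintro _ ⟨x, hx, rfl⟩
    obtain ⟨L, hL⟩ := hx.2.2
    have hsx : e.symm (φ x) = x := e.left_inv hx.1
    refine ContDiffAt.contDiffWithinAt ?_
    refine e.contDiffAt_symm (f₀' := L) (e.map_source hx.1) ?_ ?_
    · rw [hsx, hL]
      exact (cdo_diff hV3o hφ (hVV3 hx)).hasFDerivAt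
    · rw [hsx]
      exact hφ.contDiffAt (hV3o.mem_nhds (hVV3 hx))
  · intro x hx
    exact e.left_inv hx.1
end Fwd

section Bwd
variable {n : ℕ}

lemma B_poly (B : E n →L[ℝ] E n →L[ℝ] E n) (hs : ∀ u v, B u v = B v u)
    (hB : ∀ y, ∃ s : ℝ, B y y = s • y) (P : E n →L[ℝ] ℝ)
    (hP : ∀ i, P (ee i) = (1 / 2) * B (ee i) (ee i) i) (u v : E n) :
    B u v = P u • v + P v • u := by
  have h1 : ∀ i, B (ee i) (ee i) = (2 * P (ee i)) • ee i := by
    intro i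
    obtain ⟨s, h⟩ := hB (ee i)
    have h' := congrFun h i
    rw [hP, h]
    simp
  refine lin_ext (f := fun u => B u v) (h := fun u => P u • v + P v • u) ?_ ?_ ?_ ?_
    (fun i => ?_) u
  · intros; simp
  · intros; simp
  · intros; simp only [map_add]; module
  · intros; simp only [map_smul, smul_eq_mul]; module
  refine lin_ext (f := fun v => B (ee i) v) (h := fun v => P (ee i) • v + P v • (ee i))
    ?_ ?_ ?_ ?_ (fun j => ?_) v
  · intros; simp
  · intros; simp
  · intros; simp only [map_add]; module
  · intros; simp only [map_smul, smul_eq_mul]; module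
  by_cases hij : i = j
  · subst hij
    rw [h1]; module
  obtain ⟨s, h2⟩ := hB (ee i + ee j)
  obtain ⟨t, h3⟩ := hB (ee i - ee j)
  simp only [map_add, add_apply, map_sub, sub_apply, h1, hs (ee j) (ee i)] at h2 h3
  have h4 : (4 * P (ee i)) • (ee i : E n) + (4 * P (ee j)) • (ee j : E n) =
      (s + t) • (ee i : E n) + (s - t) • (ee j : E n) := by
    linear_combination (norm := module) (1 : ℝ) • h2 + (1 : ℝ) • h3
  have h5 := congrFun h4 i
  have h6 := congrFun h4 j
  simp [hij, Ne.symm hij] at h5 h6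
  have hi : P (ee i) = (s + t) / 4 := by simp only [ee]; linarith
  have hj : P (ee j) = (s - t) / 4 := by simp only [ee]; linarith
  rw [hi, hj]
  linear_combination (norm := module) (1 / 4 : ℝ) • h2 - (1 / 4 : ℝ) • h3

lemma hdim_E (hn : 2 ≤ n) (k : E n) : ∃ l : E n, ∀ c : ℝ, l ≠ c • k := by
  by_contra! h
  obtain ⟨a, ha⟩ := h (ee ⟨0, by omega⟩)
  obtain ⟨b, hb⟩ := h (ee ⟨1, by omega⟩)
  have h1 := congrFun ha ⟨0, by omega⟩
  have h2 := congrFun ha ⟨1, by omega⟩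
  have h3 := congrFun hb ⟨1, by omega⟩
  simp at h1 h2 h3
  rcases h2 with h2 | h2
  · simp [h2] at h1
  · simp [h2] at h3

lemma det_pos2 (hn : 2 ≤ n) {U : Set (E n)} {g : E n → Matrix (Fin n) (Fin n) ℝ}
    (hp : ∀ x ∈ U, (g x).PosDef) {x : E n} (hx : x ∈ U) :
    0 < g x ⟨0, by omega⟩ ⟨0, by omega⟩ * g x ⟨1, by omega⟩ ⟨1, by omega⟩ -
      g x ⟨0, by omega⟩ ⟨1, by omega⟩ * g x ⟨1, by omega⟩ ⟨0, by omega⟩ := by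
  set a : Fin n := ⟨0, by omega⟩
  set b : Fin n := ⟨1, by omega⟩
  have hab : a ≠ b := by simp [a, b]
  have h1 := gB_pos hp x hx (ee a) (by simp)
  rw [gB_ee] at h1
  have h2 := gB_pos hp x hx (g x a b • ee a - g x a a • ee b) (fun h0 => by
    have := congrFun h0 b
    simp [hab, hab.symm] at this
    exact h1.ne' this)
  simp only [map_sub, map_smul, sub_apply, smul_apply, gB_ee, smul_eq_mul] at h2
  rw [g_symm hp hx b a] at h2 ⊢
  have h3 : 0 < g x a a * (g x a a * g x b b - g x a b * g x a b) := by linarith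
  exact (mul_pos_iff_of_pos_left h1).1 h3

lemma local_const (hn : 2 ≤ n) {U V : Set (E n)} (hU : IsOpen U)
    {g : E n → Matrix (Fin n) (Fin n) ℝ}
    (hg : ∀ i j : Fin n, ContDiffOn ℝ (⊤ : ℕ∞) (fun x => g x i j) U)
    (hp : ∀ x ∈ U, (g x).PosDef) (hV : IsOpen V) (hVU : V ⊆ U)
    {φ ψ : E n → E n} (hφ : ContDiffOn ℝ (⊤ : ℕ∞) φ V) (hW : IsOpen (φ '' V))
    (hψ : ContDiffOn ℝ (⊤ : ℕ∞) ψ (φ '' V)) (hi : ∀ x ∈ V, ψ (φ x) = x)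
    (hM : ∀ x ∈ V, ∀ y, ∃ s : ℝ, fderiv ℝ (fderiv ℝ φ) x y y =
          fderiv ℝ φ x (GB g x y y) + s • fderiv ℝ φ x y) :
    ∃ lam : E n → ℝ, DifferentiableOn ℝ lam V ∧ (∀ x ∈ V, fderiv ℝ lam x = 0) ∧
      ∀ x ∈ V, ∀ i j k l, RiemLow g i j k l x =
        lam x * (g x i k * g x j l - g x i l * g x j k) := by
  set B : E n → E n →L[ℝ] E n →L[ℝ] E n := fun x =>
    (ContinuousLinearMap.compL ℝ (E n) (E n) (E n) (fderiv ℝ ψ (φ x))) ∘L (fderiv ℝ (fderiv ℝ φ) x)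
      - GB g x with hB
  have Bapp : ∀ x u v, B x u v = fderiv ℝ ψ (φ x) (fderiv ℝ (fderiv ℝ φ) x u v) - GB g x u v :=
    fun x u v => rfl
  set P : E n → E n →L[ℝ] ℝ := fun x => ∑ i, ((1 / 2) * B x (ee i) (ee i) i) •
    (ContinuousLinearMap.proj (R := ℝ) (φ := fun _ : Fin n => ℝ) i) with hPd
  have hPe : ∀ x i, P x (ee i) = (1 / 2) * B x (ee i) (ee i) i := by
    intro x i
    simp only [hPd, sum_apply, smul_apply]
    rw [Finset.sum_eq_single i]
    · simp
    · intro b _ hb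
      simp [hb]
    · simp
  have hBs : ∀ x ∈ V, ∀ u v, B x u v = B x v u := by
    intro x hx u v
    rw [Bapp, Bapp, snd_symm hV hφ hx u v, GB_symm hU hp x (hVU hx) u v]
  have hBy : ∀ x ∈ V, ∀ y, ∃ s : ℝ, B x y y = s • y := by
    intro x hx y
    obtain ⟨s, h⟩ := hM x hx y
    have hd := (inv_deriv hV hφ hW hψ hi hx).1
    refine ⟨s, ?_⟩
    rw [Bapp, h, map_add, map_smul, hd, hd]
    abel
  have hBP : ∀ x ∈ V, ∀ u v, B x u v = P x u • v + P x v • u := fun x hx =>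
    B_poly (B x) (hBs x hx) (hBy x hx) (P x) (hPe x)
  have hΓ := (GB_smooth hU hg hp).mono hVU
  have hPs : ContDiffOn ℝ (⊤ : ℕ∞) P V := by
    refine contDiffOn_clm_apply.2 fun v => ?_
    simp only [hPd, sum_apply, smul_apply, smul_eq_mul, ContinuousLinearMap.proj_apply]
    refine ContDiffOn.sum fun i _ => (contDiffOn_const.mul ?_).mul contDiffOn_const
    simp only [Bapp]
    have h1 : ContDiffOn ℝ (⊤ : ℕ∞) (fun x => fderiv ℝ ψ (φ x)) V :=
      (cdo_fderiv hW hψ).comp hφ (fun x hx => ⟨x, hx, rfl⟩)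
    have h2 := cdo_fderiv hV (cdo_fderiv hV hφ)
    have h3 : ContDiffOn ℝ (⊤ : ℕ∞) (fun x => fderiv ℝ ψ (φ x)
        (fderiv ℝ (fderiv ℝ φ) x (ee i) (ee i)) - GB g x (ee i) (ee i)) V :=
      (h1.clm_apply ((h2.clm_apply contDiffOn_const).clm_apply contDiffOn_const)).sub
        ((hΓ.clm_apply contDiffOn_const).clm_apply contDiffOn_const)
    exact contDiffOn_pi.1 h3 i
  obtain ⟨lam, hl1, hl2, hl3⟩ := proj_flat_const hV (hdim_E hn) hφ ((gB_smooth hg).mono hVU) hΓ hPs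
    (fun x hx => GB_symm hU hp x (hVU hx)) (fun x hx => gB_symm hp x (hVU hx))
    (fun x hx => gB_pos hp x (hVU hx)) (fun x hx => GB_comp hU hg hp x (hVU hx))
    (fun x hx u v huv => by
      have hd := (inv_deriv hV hφ hW hψ hi hx).1
      rw [← hd u, huv, hd v])
    (fun x hx u v => by
      have h1 := congrArg (fderiv ℝ φ x) (hBP x hx u v)
      rw [Bapp, map_sub, (inv_deriv hV hφ hW hψ hi hx).2, map_add, map_smul, map_smul] at h1
      rw [add_assoc, ← h1]
      abel)
  refine ⟨lam, hl1, hl2, fun x hx i j k l => ?_⟩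
  rw [← Rm_ee hU hg hp (hVU hx), hl3 x hx]
  simp only [map_smul, map_sub, gB_ee, smul_eq_mul]
  ring
end Bwd

end Helpers

/-- a smooth Riemannian metric on a connected open `U ⊆ ℝⁿ` (`n ≥ 2`) has
constant sectional curvature iff around every point there is a smooth diffeomorphism `φ`
such that the expression of the associated Finsler function `F` in the `φ`-coordinates
satisfies the Hamel equations. -/
theorem statement2 {n : ℕ} (hn : 2 ≤ n) (U : Set (E n)) (hUopen : IsOpen U)
    (hUconn : IsConnected U) (g : E n → Matrix (Fin n) (Fin n) ℝ)
    (hgsmooth : ∀ i j : Fin n, ContDiffOn ℝ (⊤ : ℕ∞) (fun x => g x i j) U)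
    (hgpos : ∀ x ∈ U, (g x).PosDef)
    (F : E n × E n → ℝ)
    (hFdef : F = fun p => Real.sqrt (∑ i, ∑ j, g p.1 i j * p.2 i * p.2 j)) :
    (∃ c : ℝ, ∀ x ∈ U, ∀ i j k l : Fin n,
        RiemLow g i j k l x = c * (g x i k * g x j l - g x i l * g x j k)) ↔
    (∀ x₀ ∈ U, ∃ (V : Set (E n)) (φ ψ : E n → E n) (Fb : E n × E n → ℝ),
        IsOpen V ∧ x₀ ∈ V ∧ V ⊆ U ∧
        ContDiffOn ℝ (⊤ : ℕ∞) φ V ∧ IsOpen (φ '' V) ∧ ContDiffOn ℝ (⊤ : ℕ∞) ψ (φ '' V) ∧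
        (∀ x ∈ V, ψ (φ x) = x) ∧
        ContDiffOn ℝ (⊤ : ℕ∞) Fb {p : E n × E n | p.1 ∈ φ '' V ∧ p.2 ≠ 0} ∧
        (∀ x ∈ V, ∀ y : E n, Fb (φ x, fderiv ℝ φ x y) = F (x, y)) ∧
        (∀ xb ∈ φ '' V, ∀ y : E n, y ≠ 0 → ∀ i : Fin n,
          ∑ k, pdx k (pdy i Fb) (xb, y) * y k = ∑ k, pdx i (pdy k Fb) (xb, y) * y k)) := by
  have hF : ∀ x y, F (x, y) = Real.sqrt (gB g x y y) := by
    intro x y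
    rw [hFdef, gB_apply]
  constructor
  · rintro ⟨c, hc⟩ x₀ hx₀
    obtain ⟨V, φ, ψ, hV, hx, hVU, hφ, hW, hψ, hi, hM⟩ := exists_coord hUopen hgsmooth hgpos c
      (fun x hx k l j => Rm_of_index hUopen hgsmooth hgpos hx c (hc x hx) k l j) hx₀
    refine ⟨V, φ, ψ, fun p => Real.sqrt (Gt g ψ p.1 p.2 p.2), hV, hx, hVU, hφ, hW, hψ, hi,
      ?_, ?_, ?_⟩
    · refine ContDiffOn.sqrt ?_ (fun p hp =>
        (Gt_pos hgpos hV hVU hφ hW hψ hi p.1 hp.1 p.2 hp.2).ne')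
      have h1 : ContDiffOn ℝ (⊤ : ℕ∞) (fun p : E n × E n => Gt g ψ p.1)
          {p : E n × E n | p.1 ∈ φ '' V ∧ p.2 ≠ 0} :=
        (Gt_smooth hgsmooth hVU hW hψ hi).comp contDiffOn_fst (fun p hp => hp.1)
      exact (h1.clm_apply contDiffOn_snd).clm_apply contDiffOn_snd
    · intro x hx y
      have hd := (inv_deriv hV hφ hW hψ hi hx).1
      simp only [Gt_apply]
      rw [hF, hi x hx, hd]
    · rintro _ ⟨x, hx, rfl⟩ η hη
      have hd := (inv_deriv hV hφ hW hψ hi hx).2 η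
      rw [← hd] at hη ⊢
      exact (pack hUopen hgsmooth hgpos hV hVU hφ hW hψ hi (fun z _ η => rfl) hx hη).2 (hM x hx _)
  · intro h
    have hloc : ∀ x₀ ∈ U, ∃ (V : Set (E n)) (lam : E n → ℝ), IsOpen V ∧ x₀ ∈ V ∧ V ⊆ U ∧
        DifferentiableOn ℝ lam V ∧ (∀ x ∈ V, fderiv ℝ lam x = 0) ∧
        ∀ x ∈ V, ∀ i j k l, RiemLow g i j k l x =
          lam x * (g x i k * g x j l - g x i l * g x j k) := by
      intro x₀ hx₀
      obtain ⟨V, φ, ψ, Fb, hV, hx, hVU, hφ, hW, hψ, hi, _, hFb, hH⟩ := h x₀ hx₀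
      have hFb' : ∀ z ∈ φ '' V, ∀ η, Fb (z, η) = Real.sqrt (Gt g ψ z η η) := by
        rintro _ ⟨x, hx, rfl⟩ η
        have hd := (inv_deriv hV hφ hW hψ hi hx).2 η
        conv_lhs => rw [← hd]
        rw [hFb x hx, hF, Gt_apply, hi x hx]
      obtain ⟨lam, h1, h2, h3⟩ := local_const hn hUopen hgsmooth hgpos hV hVU hφ hW hψ hi
        (fun x hx y => by
          by_cases hy : y = 0
          · exact ⟨0, by simp [hy]⟩
          have hy' : fderiv ℝ φ x y ≠ 0 := fun h0 => hy (by
            rw [← (inv_deriv hV hφ hW hψ hi hx).1 y, h0, map_zero])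
          exact (pack hUopen hgsmooth hgpos hV hVU hφ hW hψ hi hFb' hx hy').1
            (hH _ ⟨x, hx, rfl⟩ _ hy'))
      exact ⟨V, lam, hV, hx, hVU, h1, h2, h3⟩
    set a : Fin n := ⟨0, by omega⟩ with ha
    set b : Fin n := ⟨1, by omega⟩ with hb
    set L : E n → ℝ := fun x => RiemLow g a b a b x /
      (g x a a * g x b b - g x a b * g x b a) with hL
    have hLlam : ∀ x₀ ∈ U, DifferentiableAt ℝ L x₀ ∧ fderiv ℝ L x₀ = 0 ∧
        ∀ i j k l, RiemLow g i j k l x₀ =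
          L x₀ * (g x₀ i k * g x₀ j l - g x₀ i l * g x₀ j k) := by
      intro x₀ hx₀
      obtain ⟨V, lam, hV, hx, hVU, h1, h2, h3⟩ := hloc x₀ hx₀
      have heq : ∀ x ∈ V, L x = lam x := by
        intro x hx
        have hpos := det_pos2 hn hgpos (hVU hx)
        simp only [hL]
        rw [h3 x hx]
        exact mul_div_cancel_right₀ _ hpos.ne'
      have hev : L =ᶠ[𝓝 x₀] lam := (hV.eventually_mem hx).mono heq
      refine ⟨(h1.differentiableAt (hV.mem_nhds hx)).congr_of_eventuallyEq hev, ?_, ?_⟩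
      · rw [hev.fderiv_eq, h2 x₀ hx]
      · intro i j k l
        rw [heq x₀ hx, h3 x₀ hx]
    obtain ⟨c, hc⟩ := hUopen.exists_is_const_of_fderiv_eq_zero hUconn.isPreconnected
      (fun x hx => (hLlam x hx).1.differentiableWithinAt) (fun x hx => (hLlam x hx).2.1)
    refine ⟨c, fun x hx i j k l => ?_⟩
    rw [(hLlam x hx).2.2 i j k l, hc x hx]
end
end

section
/- Let g be a smooth Riemannian metric on ℝⁿ with α(x,y) = √(∑_{i,j} g_{ij}(x)·y^i·y^j), let b : ℝⁿ → ℝⁿ be smooth with ∂b_i/∂x^s = ∂b_s/∂x^i for all i, s (closed deforming 1-form), and suppose that the Randers function F(x,y) = α(x,y) + ∑_i b_i(x)·y^i is a Finsler function on ℝⁿ. Then F satisfies the Hamel equations in the standard coordinates if and only if α does; consequently, the Randers space (ℝⁿ, F) is rectilinear in the standard coordinates if and only if the Riemannian space (ℝⁿ, α) is rectilinear in the standard coordinates. -/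
open scoped BigOperators Topology
noncomputable section

section helpers

variable {n : ℕ}

lemma isOpen_slit : IsOpen {p : E n × E n | p.2 ≠ 0} :=
  isOpen_ne_fun continuous_snd continuous_const

lemma homog_fderiv {G : E n × E n → ℝ}
    (hs : ContDiffOn ℝ (⊤ : ℕ∞) G {p : E n × E n | p.2 ≠ 0})
    (hh : ∀ (x y : E n) (c : ℝ), 0 < c → G (x, c • y) = c * G (x, y))
    (x y : E n) (hy : y ≠ 0) (c : ℝ) (hc : 0 < c) (u w : E n) :
    fderiv ℝ G (x, c • y) (u, c • w) = c * fderiv ℝ G (x, y) (u, w) := by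
  let L : E n × E n →L[ℝ] E n × E n :=
    (ContinuousLinearMap.fst ℝ (E n) (E n)).prod (c • ContinuousLinearMap.snd ℝ (E n) (E n))
  have hd : ∀ x y : E n, y ≠ 0 → DifferentiableAt ℝ G (x, y) := fun x y hy =>
    ((hs.contDiffAt (isOpen_slit.mem_nhds hy)).differentiableAt (by simp))
  have h1 : HasFDerivAt (G ∘ L) ((fderiv ℝ G (x, c • y)).comp L) (x, y) := by
    apply HasFDerivAt.comp
    · exact (hd x (c • y) (smul_ne_zero hc.ne' hy)).hasFDerivAt
    · exact L.hasFDerivAt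
  have h2 : HasFDerivAt (G ∘ L) (c • fderiv ℝ G (x, y)) (x, y) := by
    have : G ∘ L = fun p => c • G p := by
      funext p
      exact hh p.1 p.2 c hc
    rw [this]
    exact (hd x y hy).hasFDerivAt.const_smul c
  have := congrArg (fun A => A (u, w)) (h1.unique h2)
  simpa [L] using this

lemma pdy_homog {G : E n × E n → ℝ}
    (hs : ContDiffOn ℝ (⊤ : ℕ∞) G {p : E n × E n | p.2 ≠ 0})
    (hh : ∀ (x y : E n) (c : ℝ), 0 < c → G (x, c • y) = c * G (x, y))
    (x y : E n) (hy : y ≠ 0) (c : ℝ) (hc : 0 < c) (i : Fin n) :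
    pdy i G (x, c • y) = pdy i G (x, y) := by
  have h := homog_fderiv hs hh x y hy c hc 0 (Pi.single i 1)
  have h2 : ((0 : E n), c • (Pi.single i 1 : E n)) = c • ((0 : E n), (Pi.single i 1 : E n)) := by
    simp
  rw [h2, map_smul, smul_eq_mul] at h
  exact mul_left_cancel₀ hc.ne' h

lemma pdx_homog {G : E n × E n → ℝ}
    (hs : ContDiffOn ℝ (⊤ : ℕ∞) G {p : E n × E n | p.2 ≠ 0})
    (hh : ∀ (x y : E n) (c : ℝ), 0 < c → G (x, c • y) = c * G (x, y))
    (x y : E n) (hy : y ≠ 0) (c : ℝ) (hc : 0 < c) (i : Fin n) :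
    pdx i G (x, c • y) = c * pdx i G (x, y) := by
  have h := homog_fderiv hs hh x y hy c hc (Pi.single i 1) 0
  rwa [smul_zero] at h

lemma pdy_diff {G : E n × E n → ℝ}
    (hs : ContDiffOn ℝ (⊤ : ℕ∞) G {p : E n × E n | p.2 ≠ 0})
    (p : E n × E n) (hp : p.2 ≠ 0) (i : Fin n) :
    DifferentiableAt ℝ (pdy i G) p := by
  have h1 : ContDiffAt ℝ (⊤ : ℕ∞) G p := hs.contDiffAt (isOpen_slit.mem_nhds hp)
  have h2 : ContDiffAt ℝ 1 (fderiv ℝ G) p :=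
    h1.fderiv_right (m := 1) (by norm_cast)
  exact (h2.differentiableAt (by simp)).clm_apply (differentiableAt_const _)

lemma deriv_contDiffOn {γ : ℝ → E n} {t₁ t₂ : ℝ} (hγ : ContDiffOn ℝ 2 γ (Set.Ioo t₁ t₂)) :
    ContDiffOn ℝ 1 (deriv γ) (Set.Ioo t₁ t₂) :=
  hγ.deriv_of_isOpen isOpen_Ioo (by norm_num)

lemma local_dir {G : E n × E n → ℝ}
    (hs : ContDiffOn ℝ (⊤ : ℕ∞) G {p : E n × E n | p.2 ≠ 0})
    (hh : ∀ (x y : E n) (c : ℝ), 0 < c → G (x, c • y) = c * G (x, y))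
    (hpos : ∀ x y : E n, y ≠ 0 → 0 < G (x, y))
    (hR : Rectilinear G) (γ : ℝ → E n) (t₁ t₂ : ℝ)
    (hγ : ContDiffOn ℝ 2 γ (Set.Ioo t₁ t₂))
    (hv : ∀ t ∈ Set.Ioo t₁ t₂, deriv γ t ≠ 0)
    (hEL : ∀ (i : Fin n), ∀ t ∈ Set.Ioo t₁ t₂,
      deriv (fun s => pdy i G (γ s, deriv γ s)) t = pdx i G (γ t, deriv γ t))
    (t₀ : ℝ) (ht₀ : t₀ ∈ Set.Ioo t₁ t₂) :
    ∃ a : E n, a ≠ 0 ∧ ∀ᶠ t in 𝓝 t₀, ∃ k : ℝ, 0 < k ∧ deriv γ t = k • a := by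
  have hγ' := deriv_contDiffOn hγ
  set v : ℝ → ℝ := fun t => G (γ t, deriv γ t) with hvdef
  have hvC : ContDiffOn ℝ 1 v (Set.Ioo t₁ t₂) :=
    ContDiffOn.comp (hs.of_le (by norm_cast))
      ((hγ.of_le (by norm_num)).prodMk hγ') (fun t ht => hv t ht)
  have hvpos : ∀ t ∈ Set.Ioo t₁ t₂, 0 < v t := fun t ht => hpos _ _ (hv t ht)
  set σ : ℝ → ℝ := fun t => ∫ x in t₀..t, v x with hσ
  have hσd : ∀ t ∈ Set.Ioo t₁ t₂, HasDerivAt σ (v t) t := by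
    intro t ht
    apply intervalIntegral.integral_hasDerivAt_right
    · apply ContinuousOn.intervalIntegrable
      exact hvC.continuousOn.mono (Set.OrdConnected.uIcc_subset Set.ordConnected_Ioo ht₀ ht)
    · exact hvC.continuousOn.stronglyMeasurableAtFilter isOpen_Ioo t ht
    · exact hvC.continuousOn.continuousAt (isOpen_Ioo.mem_nhds ht)
  have hσC : ContDiffOn ℝ 2 σ (Set.Ioo t₁ t₂) := by
    rw [show (2 : WithTop ℕ∞) = 1 + 1 by norm_num, contDiffOn_succ_iff_deriv_of_isOpen isOpen_Ioo]
    refine ⟨fun t ht => (hσd t ht).differentiableAt.differentiableWithinAt, by simp, ?_⟩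
    exact hvC.congr (fun t ht => (hσd t ht).deriv)
  have hσA : ContDiffAt ℝ 2 σ t₀ := hσC.contDiffAt (isOpen_Ioo.mem_nhds ht₀)
  have hfd : HasFDerivAt σ
      ((ContinuousLinearEquiv.unitsEquivAut ℝ (Units.mk0 (v t₀) (hvpos t₀ ht₀).ne') : ℝ ≃L[ℝ] ℝ) :
        ℝ →L[ℝ] ℝ) t₀ := by
    have := (hσd t₀ ht₀).hasFDerivAt
    refine this.congr_fderiv ?_
    apply ContinuousLinearMap.ext_ring
    simp
  let e := hσA.toOpenPartialHomeomorph σ hfd (by norm_num)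
  have heσ : ∀ t, e t = σ t := fun t => rfl
  have hsrc : t₀ ∈ e.source := hσA.mem_toOpenPartialHomeomorph_source hfd (by norm_num)
  set τ : ℝ → ℝ := fun r => e.symm r with hτ
  have hτ0 : τ (σ t₀) = t₀ := e.left_inv hsrc
  have hτC : ContDiffAt ℝ 2 τ (σ t₀) := hσA.to_localInverse hfd (by norm_num)
  have htgt : σ t₀ ∈ e.target := e.map_source hsrc
  have hnh : ∀ᶠ r in 𝓝 (σ t₀), ContDiffAt ℝ 2 τ r ∧ r ∈ e.target ∧ τ r ∈ Set.Ioo t₁ t₂ := by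
    have hT : ∀ᶠ r in 𝓝 (σ t₀), r ∈ e.target := e.open_target.mem_nhds htgt
    refine (hτC.eventually (by simp)).and (hT.and ?_)
    apply hτC.continuousAt.eventually
    rw [hτ0]
    exact isOpen_Ioo.mem_nhds ht₀
  obtain ⟨ε, hε, hball⟩ := Metric.eventually_nhds_iff_ball.1 hnh
  rw [Real.ball_eq_Ioo] at hball
  set r₁ := σ t₀ - ε
  set r₂ := σ t₀ + ε
  have hστ : ∀ r ∈ Set.Ioo r₁ r₂, σ (τ r) = r := fun r hr => e.right_inv (hball r hr).2.1
  have hτd : ∀ r ∈ Set.Ioo r₁ r₂, HasDerivAt τ (v (τ r))⁻¹ r := by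
    intro r hr
    have hd := ((hball r hr).1.differentiableAt (by norm_num)).hasDerivAt
    have h1 := (hσd (τ r) (hball r hr).2.2).comp r hd
    have h2 : HasDerivAt (σ ∘ τ) 1 r := by
      apply (hasDerivAt_id r).congr_of_eventuallyEq
      filter_upwards [isOpen_Ioo.mem_nhds hr] with q hq
      exact hστ q hq
    have h3 := h1.unique h2
    rw [eq_inv_of_mul_eq_one_right h3] at hd
    exact hd
  have hγd : ∀ t ∈ Set.Ioo t₁ t₂, HasDerivAt γ (deriv γ t) t := fun t ht =>
    ((hγ.contDiffAt (isOpen_Ioo.mem_nhds ht)).differentiableAt (by norm_num)).hasDerivAt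
  have hηd : ∀ r ∈ Set.Ioo r₁ r₂, HasDerivAt (γ ∘ τ) ((v (τ r))⁻¹ • deriv γ (τ r)) r := by
    intro r hr
    exact (hγd _ (hball r hr).2.2).scomp r (hτd r hr)
  have hgeo : IsGeodesic G (γ ∘ τ) r₁ r₂ := by
    refine ⟨by simp only [r₁, r₂]; linarith, ?_, ?_, ⟨1, one_pos, ?_⟩, ?_⟩
    · exact hγ.comp (fun r hr => (hball r hr).1.contDiffWithinAt) (fun r hr => (hball r hr).2.2)
    · intro r hr
      have hm := (hball r hr).2.2
      rw [(hηd r hr).deriv]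
      exact smul_ne_zero (inv_ne_zero (hvpos _ hm).ne') (hv _ hm)
    · intro r hr
      have hm := (hball r hr).2.2
      rw [(hηd r hr).deriv, Function.comp, hh _ _ _ (inv_pos.2 (hvpos _ hm))]
      exact inv_mul_cancel₀ (hvpos _ hm).ne'
    · intro i r hr
      have hm := (hball r hr).2.2
      have hev : (fun q => pdy i G ((γ ∘ τ) q, deriv (γ ∘ τ) q)) =ᶠ[𝓝 r]
          (fun s => pdy i G (γ s, deriv γ s)) ∘ τ := by
        filter_upwards [isOpen_Ioo.mem_nhds hr] with q hq
        have hmq := (hball q hq).2.2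
        rw [(hηd q hq).deriv]
        exact pdy_homog hs hh _ _ (hv _ hmq) _ (inv_pos.2 (hvpos _ hmq)) i
      have hD : DifferentiableAt ℝ (fun s => pdy i G (γ s, deriv γ s)) (τ r) := by
        have h1 : DifferentiableAt ℝ (fun s => (γ s, deriv γ s)) (τ r) :=
          (hγd _ hm).differentiableAt.prodMk
            ((hγ'.contDiffAt (isOpen_Ioo.mem_nhds hm)).differentiableAt (by norm_num))
        exact DifferentiableAt.comp (τ r) (g := pdy i G) (f := fun s => (γ s, deriv γ s))
          (pdy_diff hs (γ (τ r), deriv γ (τ r)) (hv _ hm) i) h1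
      rw [hev.deriv_eq, (hD.hasDerivAt.comp r (hτd r hr)).deriv, (hηd r hr).deriv, hEL i _ hm]
      rw [pdx_homog hs hh _ _ (hv _ hm) _ (inv_pos.2 (hvpos _ hm)) i, mul_comm]
      rfl
  obtain ⟨f, a, b, ha, hfC, hf', hfab⟩ := hR _ _ _ hgeo
  refine ⟨a, ha, ?_⟩
  have hr0 : σ t₀ ∈ Set.Ioo r₁ r₂ := by constructor <;> simp only [r₁, r₂] <;> linarith
  have hσc : ContinuousAt σ t₀ := hσA.continuousAt
  filter_upwards [e.open_source.mem_nhds hsrc, isOpen_Ioo.mem_nhds ht₀,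
    hσc.eventually (isOpen_Ioo.mem_nhds hr0)] with t h1 h2 h3
  have hτt : τ (σ t) = t := e.left_inv h1
  have hd1 := hηd _ h3
  rw [hτt] at hd1
  have hd2 : HasDerivAt (γ ∘ τ) (deriv f (σ t) • a) (σ t) := by
    have hfd := ((hfC.contDiffAt (isOpen_Ioo.mem_nhds h3)).differentiableAt
      (by norm_num)).hasDerivAt
    apply ((hfd.smul_const a).add_const b).congr_of_eventuallyEq
    filter_upwards [isOpen_Ioo.mem_nhds h3] with q hq
    exact hfab q hq
  have h4 := hd1.unique hd2
  refine ⟨v t * deriv f (σ t), mul_pos (hvpos t h2) (hf' _ h3), ?_⟩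
  rw [mul_smul, ← h4, smul_smul, mul_inv_cancel₀ (hvpos t h2).ne', one_smul]

lemma straight_of_local {γ : ℝ → E n} {t₁ t₂ : ℝ} (hlt : t₁ < t₂)
    (hγ : ContDiffOn ℝ 2 γ (Set.Ioo t₁ t₂))
    (hv : ∀ t ∈ Set.Ioo t₁ t₂, deriv γ t ≠ 0)
    (hloc : ∀ t₀ ∈ Set.Ioo t₁ t₂,
      ∃ a : E n, a ≠ 0 ∧ ∀ᶠ t in 𝓝 t₀, ∃ k : ℝ, 0 < k ∧ deriv γ t = k • a) :
    ∃ (f : ℝ → ℝ) (a b : E n), a ≠ 0 ∧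
      ContDiffOn ℝ 2 f (Set.Ioo t₁ t₂) ∧
      (∀ t ∈ Set.Ioo t₁ t₂, 0 < deriv f t) ∧
      ∀ t ∈ Set.Ioo t₁ t₂, γ t = f t • a + b := by
  have hev : ∀ t₀ ∈ Set.Ioo t₁ t₂, ∃ c : E n,
      (fun t => ‖deriv γ t‖⁻¹ • deriv γ t) =ᶠ[𝓝 t₀] fun _ => c := by
    intro t₀ ht₀
    obtain ⟨a, ha, h⟩ := hloc t₀ ht₀
    refine ⟨‖a‖⁻¹ • a, ?_⟩
    filter_upwards [h] with t ⟨k, hk, hkt⟩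
    rw [hkt, norm_smul, Real.norm_of_nonneg hk.le, smul_smul, mul_inv, mul_right_comm,
      inv_mul_cancel₀ hk.ne', one_mul]
  obtain ⟨m, hm⟩ : (Set.Ioo t₁ t₂).Nonempty := Set.nonempty_Ioo.2 hlt
  set u : ℝ → E n := fun t => ‖deriv γ t‖⁻¹ • deriv γ t with hu
  have hconst : ∀ t ∈ Set.Ioo t₁ t₂, u t = u m := by
    intro t ht
    apply isOpen_Ioo.is_const_of_deriv_eq_zero (f := u) isPreconnected_Ioo _ _ ht hm
    · intro q hq
      obtain ⟨c, hc⟩ := hev q hq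
      exact (hc.differentiableAt_iff.2 (differentiableAt_const c)).differentiableWithinAt
    · intro q hq
      obtain ⟨c, hc⟩ := hev q hq
      simp [hc.deriv_eq]
  set a := u m with ha_def
  have ha : a ≠ 0 := smul_ne_zero (inv_ne_zero (norm_ne_zero_iff.2 (hv m hm))) (hv m hm)
  have hγa : ∀ t ∈ Set.Ioo t₁ t₂, deriv γ t = ‖deriv γ t‖ • a := by
    intro t ht
    rw [← hconst t ht, hu]
    simp only
    rw [smul_smul, mul_inv_cancel₀ (norm_ne_zero_iff.2 (hv t ht)), one_smul]
  obtain ⟨i, hi⟩ : ∃ i, a i ≠ 0 := by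
    by_contra! h
    exact ha (funext h)
  have hγd : ∀ t ∈ Set.Ioo t₁ t₂, HasDerivAt γ (deriv γ t) t := fun t ht =>
    ((hγ.contDiffAt (isOpen_Ioo.mem_nhds ht)).differentiableAt (by norm_num)).hasDerivAt
  have hfd : ∀ t ∈ Set.Ioo t₁ t₂, HasDerivAt (fun t => γ t i / a i) ‖deriv γ t‖ t := by
    intro t ht
    have h1 := (hasDerivAt_pi.1 (hγd t ht) i).div_const (a i)
    have h2 : deriv γ t i / a i = ‖deriv γ t‖ := by
      rw [div_eq_iff hi]
      exact congrFun (hγa t ht) i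
    rwa [h2] at h1
  have hrest : ∀ t ∈ Set.Ioo t₁ t₂, HasDerivAt (fun t => γ t - (γ t i / a i) • a) 0 t := by
    intro t ht
    have h := (hγd t ht).sub ((hfd t ht).smul_const a)
    rw [← hγa t ht, sub_self] at h
    exact h
  refine ⟨fun t => γ t i / a i, a, γ m - (γ m i / a i) • a, ha, ?_, ?_, ?_⟩
  · exact (contDiffOn_pi.1 hγ i).div_const _
  · intro t ht
    rw [(hfd t ht).deriv]
    exact norm_pos_iff.2 (hv t ht)
  · intro t ht
    have := isOpen_Ioo.is_const_of_deriv_eq_zero (f := fun t => γ t - (γ t i / a i) • a)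
      isPreconnected_Ioo
      (fun q hq => (hrest q hq).differentiableAt.differentiableWithinAt)
      (fun q hq => (hrest q hq).deriv) ht hm
    have this' : γ t - (γ t i / a i) • a = γ m - (γ m i / a i) • a := this
    rw [← this']
    abel

lemma rect_transfer {G H : E n × E n → ℝ}
    (hs : ContDiffOn ℝ (⊤ : ℕ∞) G {p : E n × E n | p.2 ≠ 0})
    (hh : ∀ (x y : E n) (c : ℝ), 0 < c → G (x, c • y) = c * G (x, y))
    (hpos : ∀ x y : E n, y ≠ 0 → 0 < G (x, y))
    (hEL : ∀ (γ : ℝ → E n) (t₁ t₂ : ℝ), ContDiffOn ℝ 2 γ (Set.Ioo t₁ t₂) →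
      (∀ t ∈ Set.Ioo t₁ t₂, deriv γ t ≠ 0) → ∀ i : Fin n, ∀ t ∈ Set.Ioo t₁ t₂,
      deriv (fun s => pdy i H (γ s, deriv γ s)) t = pdx i H (γ t, deriv γ t) →
      deriv (fun s => pdy i G (γ s, deriv γ s)) t = pdx i G (γ t, deriv γ t))
    (hR : Rectilinear G) : Rectilinear H := by
  intro γ t₁ t₂ hg
  exact straight_of_local hg.lt hg.smooth hg.vel
    (local_dir hs hh hpos hR γ t₁ t₂ hg.smooth hg.vel
      (fun i t ht => hEL γ t₁ t₂ hg.smooth hg.vel i t ht (hg.eulerLagrange i t ht)))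

lemma fderiv_eq_sum_pd (f : E n → ℝ) (x w : E n) :
    fderiv ℝ f x w = ∑ k, pd k f x * w k := by
  conv_lhs => rw [← Finset.univ_sum_single w]
  rw [map_sum]
  refine Finset.sum_congr rfl fun k _ => ?_
  have : (Pi.single k (w k) : E n) = w k • Pi.single k 1 := by
    rw [← Pi.single_smul]; simp
  rw [this, map_smul, smul_eq_mul, mul_comm]
  rfl

/-- Derivative of the 1-form part. -/
lemma beta_hasFDerivAt (b : E n → E n)
    (hb : ∀ i : Fin n, ContDiff ℝ (⊤ : ℕ∞) (fun x => b x i)) (p : E n × E n) (w : E n × E n) :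
    fderiv ℝ (fun p : E n × E n => ∑ i, b p.1 i * p.2 i) p w =
      ∑ i, (b p.1 i * w.2 i + p.2 i * fderiv ℝ (fun x => b x i) p.1 w.1) := by
  have h1 : ∀ i : Fin n, HasFDerivAt (fun p : E n × E n => b p.1 i)
      ((fderiv ℝ (fun x => b x i) p.1).comp (ContinuousLinearMap.fst ℝ (E n) (E n))) p := by
    intro i
    exact HasFDerivAt.comp p (g := fun x => b x i) (f := Prod.fst)
      ((hb i).differentiable (by simp) p.1).hasFDerivAt hasFDerivAt_fst
  have h2 : ∀ i : Fin n, HasFDerivAt (fun p : E n × E n => p.2 i)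
      ((ContinuousLinearMap.proj i : E n →L[ℝ] ℝ).comp
        (ContinuousLinearMap.snd ℝ (E n) (E n))) p := fun i =>
    ((ContinuousLinearMap.proj i : E n →L[ℝ] ℝ).comp
        (ContinuousLinearMap.snd ℝ (E n) (E n))).hasFDerivAt
  have h3 := HasFDerivAt.fun_sum (u := Finset.univ) fun i _ => (h1 i).fun_mul (h2 i)
  rw [h3.fderiv]
  simp

end helpers

/-- for a Randers Finsler function `F = α + b_i y^i` with closed deforming
1-form, `F` satisfies the Hamel equations iff `α` does; consequently `(ℝⁿ, F)` is
rectilinear in the standard coordinates iff `(ℝⁿ, α)` is. -/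
theorem statement4 {n : ℕ} (g : E n → Matrix (Fin n) (Fin n) ℝ)
    (hgsmooth : ∀ i j : Fin n, ContDiff ℝ (⊤ : ℕ∞) (fun x => g x i j))
    (hgpos : ∀ x : E n, (g x).PosDef)
    (b : E n → E n) (hbsmooth : ∀ i : Fin n, ContDiff ℝ (⊤ : ℕ∞) (fun x => b x i))
    (hbclosed : ∀ (i s : Fin n) (x : E n),
      pd s (fun x' => b x' i) x = pd i (fun x' => b x' s) x)
    (α F : E n × E n → ℝ)
    (hα : α = fun p => Real.sqrt (∑ i, ∑ j, g p.1 i j * p.2 i * p.2 j))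
    (hF : F = fun p => α p + ∑ i, b p.1 i * p.2 i)
    (hFinsler : IsFinsler F) :
    (SatisfiesHamel F ↔ SatisfiesHamel α) ∧ (Rectilinear F ↔ Rectilinear α) := by
  have hβC : ContDiff ℝ (⊤ : ℕ∞) (fun p : E n × E n => ∑ i, b p.1 i * p.2 i) := by
    apply ContDiff.sum
    intro i _
    apply ContDiff.mul
    · exact (hbsmooth i).comp contDiff_fst
    · exact (contDiff_pi.1 contDiff_snd i)
  have hsF := hFinsler.smooth
  have hαF : α = fun p => F p - ∑ i, b p.1 i * p.2 i := by
    rw [hF]; funext p; simp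
  have hsα : ContDiffOn ℝ (⊤ : ℕ∞) α {p : E n × E n | p.2 ≠ 0} := by
    rw [hαF]; exact hsF.sub hβC.contDiffOn
  have hhα : ∀ (x y : E n) (c : ℝ), 0 < c → α (x, c • y) = c * α (x, y) := by
    intro x y c hc
    rw [hαF]
    simp only [hFinsler.homog x y c hc, mul_sub, Finset.mul_sum, Pi.smul_apply, smul_eq_mul]
    congr 1
    exact Finset.sum_congr rfl fun i _ => by ring
  have hposα : ∀ x y : E n, y ≠ 0 → 0 < α (x, y) := by
    intro x y hy
    rw [hα]
    apply Real.sqrt_pos.2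
    have h := (hgpos x).dotProduct_mulVec_pos hy
    refine lt_of_lt_of_eq h ?_
    simp only [dotProduct, Matrix.mulVec, Finset.mul_sum, star_trivial]
    exact Finset.sum_congr rfl fun i _ => Finset.sum_congr rfl fun j _ => by ring
  have hdα : ∀ p : E n × E n, p.2 ≠ 0 → DifferentiableAt ℝ α p := fun p hp =>
    ((hsα.contDiffAt (isOpen_slit.mem_nhds hp)).differentiableAt (by simp))
  have hfd : ∀ p : E n × E n, p.2 ≠ 0 → ∀ w, fderiv ℝ F p w = fderiv ℝ α p w +
      ∑ i, (b p.1 i * w.2 i + p.2 i * fderiv ℝ (fun x => b x i) p.1 w.1) := by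
    intro p hp w
    rw [← beta_hasFDerivAt b hbsmooth, hF,
      fderiv_fun_add (hdα p hp) (hβC.differentiable (by simp) p)]
    rfl
  have hpdy : ∀ p : E n × E n, p.2 ≠ 0 → ∀ i, pdy i F p = pdy i α p + b p.1 i := by
    intro p hp i
    unfold pdy
    rw [hfd p hp]
    simp [Pi.single_apply]
  have hpdx : ∀ p : E n × E n, p.2 ≠ 0 → ∀ i, pdx i F p = pdx i α p +
      ∑ k, pd i (fun x => b x k) p.1 * p.2 k := by
    intro p hp i
    unfold pdx
    rw [hfd p hp]
    simp [pd, mul_comm]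
  have hxy : ∀ p : E n × E n, p.2 ≠ 0 → ∀ i k, pdx k (pdy i F) p = pdx k (pdy i α) p +
      pd k (fun x => b x i) p.1 := by
    intro p hp i k
    have hev : pdy i F =ᶠ[𝓝 p] fun p => pdy i α p + b p.1 i := by
      filter_upwards [isOpen_slit.mem_nhds hp] with q hq
      exact hpdy q hq i
    have h1 : HasFDerivAt (fun p : E n × E n => b p.1 i)
        ((fderiv ℝ (fun x => b x i) p.1).comp (ContinuousLinearMap.fst ℝ (E n) (E n))) p :=
      HasFDerivAt.comp p (g := fun x => b x i) (f := Prod.fst)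
        ((hbsmooth i).differentiable (by simp) p.1).hasFDerivAt hasFDerivAt_fst
    unfold pdx
    rw [hev.fderiv_eq, fderiv_fun_add (pdy_diff hsα p hp i) h1.differentiableAt, h1.fderiv]
    simp [pd]
  have hEL : ∀ (γ : ℝ → E n) (t₁ t₂ : ℝ), ContDiffOn ℝ 2 γ (Set.Ioo t₁ t₂) →
      (∀ t ∈ Set.Ioo t₁ t₂, deriv γ t ≠ 0) → ∀ i : Fin n, ∀ t ∈ Set.Ioo t₁ t₂,
      (deriv (fun s => pdy i F (γ s, deriv γ s)) t = pdx i F (γ t, deriv γ t) ↔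
      deriv (fun s => pdy i α (γ s, deriv γ s)) t = pdx i α (γ t, deriv γ t)) := by
    intro γ t₁ t₂ hγ hv i t ht
    have hγ' := deriv_contDiffOn hγ
    have hγd : HasDerivAt γ (deriv γ t) t :=
      ((hγ.contDiffAt (isOpen_Ioo.mem_nhds ht)).differentiableAt (by norm_num)).hasDerivAt
    have hev : (fun s => pdy i F (γ s, deriv γ s)) =ᶠ[𝓝 t]
        fun s => pdy i α (γ s, deriv γ s) + b (γ s) i := by
      filter_upwards [isOpen_Ioo.mem_nhds ht] with q hq
      exact hpdy (γ q, deriv γ q) (hv q hq) i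
    have hD : DifferentiableAt ℝ (fun s => pdy i α (γ s, deriv γ s)) t := by
      have h1 : DifferentiableAt ℝ (fun s => (γ s, deriv γ s)) t :=
        hγd.differentiableAt.prodMk
          ((hγ'.contDiffAt (isOpen_Ioo.mem_nhds ht)).differentiableAt (by norm_num))
      exact DifferentiableAt.comp t (g := pdy i α) (f := fun s => (γ s, deriv γ s))
        (pdy_diff hsα (γ t, deriv γ t) (hv _ ht) i) h1
    have hb : HasDerivAt (fun s => b (γ s) i) (fderiv ℝ (fun x => b x i) (γ t) (deriv γ t)) t :=
      HasFDerivAt.comp_hasDerivAt t (l := fun x => b x i)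
        ((hbsmooth i).differentiable (by simp) (γ t)).hasFDerivAt hγd
    rw [hev.deriv_eq, deriv_fun_add hD hb.differentiableAt, hb.deriv,
      hpdx (γ t, deriv γ t) (hv t ht) i, fderiv_eq_sum_pd]
    simp only [hbclosed i]
    exact add_left_inj _
  refine ⟨?_, ?_, ?_⟩
  · unfold SatisfiesHamel
    refine forall_congr' fun x => forall_congr' fun y => forall_congr' fun hy =>
      forall_congr' fun i => ?_
    simp only [hxy (x, y) hy, add_mul, Finset.sum_add_distrib]
    simp only [hbclosed i]
    exact add_left_inj _
  · exact rect_transfer hsF hFinsler.homog hFinsler.pos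
      (fun γ t₁ t₂ h1 h2 i t ht => (hEL γ t₁ t₂ h1 h2 i t ht).2)
  · exact rect_transfer hsα hhα hposα
      (fun γ t₁ t₂ h1 h2 i t ht => (hEL γ t₁ t₂ h1 h2 i t ht).1)
end
end
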